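/- arXiv:1602.02458 — 2 statements merged into one kernel-verified Lean document; each statement's English description precedes it below -/
import Mathlib

section
/- Let m ≥ 4, let Ω ⊆ ℝ^m be open with torsion-free C^∞ Christoffel symbols Γ^λ_{μν} : Ω → ℝ, let φ : W → Ω be a geodesic flow, let γ : I → Ω be a C^∞ curve on an open interval I, and let f(t,s) = φ(γ(t), γ'(t), s) be the ∇-tangent surface, defined on a neighborhood of (t₀,0) in I × ℝ. If (∇γ)(t₀), (∇²γ)(t₀), (∇³γ)(t₀) are linearly independent, then the germ of f at (t₀,0) is diffeomorphic to the embedded cuspidal edge (u,w) ↦ (u, w², w³, 0, …, 0) : ℝ² → ℝ^m. -/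
open Set

noncomputable section

/-- `σ` is a `C^∞` diffeomorphism from the open set `U` onto its open image. -/
def SmoothDiffeoOn {E F : Type*} [NormedAddCommGroup E] [NormedSpace ℝ E]
    [NormedAddCommGroup F] [NormedSpace ℝ F] (σ : E → F) (U : Set E) : Prop :=
  IsOpen U ∧ IsOpen (σ '' U) ∧ ContDiffOn ℝ (⊤ : ℕ∞) σ U ∧
    ∃ σinv : F → E, ContDiffOn ℝ (⊤ : ℕ∞) σinv (σ '' U) ∧ ∀ x ∈ U, σinv (σ x) = x

/-- The map-germ of `f` at `p` is diffeomorphic to the map-germ of `g` at `q`: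
there are open neighborhoods `U ∋ p`, `V ∋ f p` and `C^∞` diffeomorphisms
`σ` from `U` onto an open neighborhood of `q`, `τ` from `V` onto an open
neighborhood of `g q`, with `σ p = q`, `τ (f p) = g q`, `f(U) ⊆ V` and
`τ ∘ f = g ∘ σ` on `U`. -/
def GermDiffeomorphic {E F : Type*} [NormedAddCommGroup E] [NormedSpace ℝ E]
    [NormedAddCommGroup F] [NormedSpace ℝ F]
    (f : E → F) (p : E) (g : E → F) (q : E) : Prop :=
  ∃ (U : Set E) (V : Set F) (σ : E → E) (τ : F → F),
    SmoothDiffeoOn σ U ∧ SmoothDiffeoOn τ V ∧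
    p ∈ U ∧ f p ∈ V ∧ σ p = q ∧ τ (f p) = g q ∧
    (∀ x ∈ U, f x ∈ V) ∧ ∀ x ∈ U, τ (f x) = g (σ x)

/-- Iterated covariant derivative of a curve `γ` with respect to the Christoffel
symbols `Γ` (in local coordinates): `covDeriv Γ γ k` is `∇^{k+1} γ`, i.e.
`covDeriv Γ γ 0 = ∇γ = γ'` and
`(∇^{k+1}γ)^λ(t) = d/dt (∇^k γ)^λ(t) + Σ_{μ,ν} Γ^λ_{μν}(γ(t)) (γ^μ)'(t) (∇^k γ)^ν(t)`. -/
noncomputable def covDeriv {m : ℕ} (Γ : (Fin m → ℝ) → Fin m → Fin m → Fin m → ℝ)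
    (γ : ℝ → Fin m → ℝ) : ℕ → ℝ → Fin m → ℝ
  | 0 => deriv γ
  | k + 1 => fun t l =>
      deriv (fun u => covDeriv Γ γ k u l) t +
        ∑ μ, ∑ ν, Γ (γ t) l μ ν * deriv γ t μ * covDeriv Γ γ k t ν

/-- `φ : W → Ω` is a geodesic flow for the Christoffel symbols `Γ` on the open set
`Ω ⊆ ℝ^m`: `W ⊆ Ω × ℝ^m × ℝ` is an open neighborhood of `Ω × ℝ^m × {0}`, `φ` is `C^∞`
on `W`, and for each `(x, v)` the curve `s ↦ φ(x, v, s)` is a geodesic with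
`φ(x,v,0) = x` and `∂φ/∂s(x,v,0) = v`. -/
structure IsGeodesicFlow {m : ℕ} (Γ : (Fin m → ℝ) → Fin m → Fin m → Fin m → ℝ)
    (Ω : Set (Fin m → ℝ)) (W : Set ((Fin m → ℝ) × (Fin m → ℝ) × ℝ))
    (φ : (Fin m → ℝ) × (Fin m → ℝ) × ℝ → Fin m → ℝ) : Prop where
  isOpen_W : IsOpen W
  subset_fst : ∀ p ∈ W, p.1 ∈ Ω
  mem_zero : ∀ x ∈ Ω, ∀ v, (x, v, (0 : ℝ)) ∈ W
  smooth : ContDiffOn ℝ (⊤ : ℕ∞) φ W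
  mapsTo : ∀ p ∈ W, φ p ∈ Ω
  init_pos : ∀ x ∈ Ω, ∀ v, φ (x, v, 0) = x
  init_vel : ∀ x ∈ Ω, ∀ v, deriv (fun s => φ (x, v, s)) 0 = v
  geodesic : ∀ p ∈ W, ∀ l,
    deriv (deriv (fun s => φ (p.1, p.2.1, s) l)) p.2.2 +
      ∑ μ, ∑ ν, Γ (φ p) l μ ν * deriv (fun s => φ (p.1, p.2.1, s) μ) p.2.2 *
        deriv (fun s => φ (p.1, p.2.1, s) ν) p.2.2 = 0

section CuspidalHelpers

open Set Filter Topology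
open scoped ContDiff

theorem ce_contDiff_param_aux {E : Type} [NormedAddCommGroup E] [NormedSpace ℝ E] [ProperSpace E]
    (n : ℕ) : ∀ {F : Type} [NormedAddCommGroup F] [NormedSpace ℝ F] [CompleteSpace F]
    (h : E × ℝ → F), ContDiff ℝ ∞ h → ContDiff ℝ n (fun x => ∫ t in (0:ℝ)..1, h (x, t)) := by
  induction n with
  | zero =>
    intro F _ _ _ h hh
    have := hh.continuous
    exact contDiff_zero.2 (intervalIntegral.continuous_parametric_intervalIntegral_of_continuous' (by exact this) 0 1)
  | succ n ih =>
    intro F _ _ _ h hh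
    have hc := hh.continuous
    set h' : E × ℝ → (E →L[ℝ] F) := fun p => (fderiv ℝ h p).comp (ContinuousLinearMap.inl ℝ E ℝ) with hh'
    have hs : ContDiff ℝ ∞ h' := by
      have : ContDiff ℝ ∞ (fderiv ℝ h) := hh.fderiv_right (by simp)
      exact this.clm_comp contDiff_const
    have hc' := hs.continuous
    have := contDiff_succ_iff_hasFDerivAt (𝕜 := ℝ) (n := n) (f := fun x => ∫ t in (0:ℝ)..1, h (x, t))
    push_cast
    rw [this]
    refine ⟨fun x => ∫ t in (0:ℝ)..1, h' (x, t), ih h' hs, fun x => ?_⟩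
    obtain ⟨C, hC⟩ := ((isCompact_closedBall x 1).prod (isCompact_Icc (a := (0:ℝ)) (b := 1))).exists_bound_of_continuousOn hc'.continuousOn
    refine intervalIntegral.hasFDerivAt_integral_of_dominated_of_fderiv_le (bound := fun _ => C) (F' := fun x t => h' (x, t))
      (Metric.closedBall_mem_nhds x one_pos) ?_ ?_ ?_ ?_ ?_ ?_
    · refine Eventually.of_forall fun y => ?_
      exact (hc.comp (by fun_prop : Continuous fun t : ℝ => (y, t))).aestronglyMeasurable
    · exact (hc.comp (by fun_prop : Continuous fun t : ℝ => (x, t))).intervalIntegrable _ _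
    · exact (hc'.comp (by fun_prop : Continuous fun t : ℝ => (x, t))).aestronglyMeasurable
    · refine Eventually.of_forall fun t ht y hy => ?_
      rw [uIoc_of_le zero_le_one] at ht
      exact hC (y, t) ⟨hy, Ioc_subset_Icc_self ht⟩
    · simp
    · refine Eventually.of_forall fun t ht y hy => ?_
      have h1 : HasFDerivAt h (fderiv ℝ h (y, t)) (y, t) := (hh.differentiable (by simp) _).hasFDerivAt
      exact h1.comp y (hasFDerivAt_prodMk_left y t)

theorem ce_contDiff_param {E : Type} [NormedAddCommGroup E] [NormedSpace ℝ E] [ProperSpace E]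
    {F : Type} [NormedAddCommGroup F] [NormedSpace ℝ F] [CompleteSpace F]
    (h : E × ℝ → F) (hh : ContDiff ℝ ∞ h) : ContDiff ℝ ∞ (fun x => ∫ t in (0:ℝ)..1, h (x, t)) :=
  contDiff_infty.2 fun n => ce_contDiff_param_aux n h hh

/-- partial derivative in the second variable -/
noncomputable def cePy {V : Type} [NormedAddCommGroup V] [NormedSpace ℝ V] (g : ℝ × ℝ → V) : ℝ × ℝ → V :=
  fun p => fderiv ℝ g p (0, 1)

noncomputable def cePu {V : Type} [NormedAddCommGroup V] [NormedSpace ℝ V] (g : ℝ × ℝ → V) : ℝ × ℝ → V :=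
  fun p => fderiv ℝ g p (1, 0)

section
variable {V : Type} [NormedAddCommGroup V] [NormedSpace ℝ V]

theorem cePy_smooth {g : ℝ × ℝ → V} (hg : ContDiff ℝ ∞ g) : ContDiff ℝ ∞ (cePy g) :=
  (hg.fderiv_right (m := ∞) (by simp)).clm_apply contDiff_const

theorem cePu_smooth {g : ℝ × ℝ → V} (hg : ContDiff ℝ ∞ g) : ContDiff ℝ ∞ (cePu g) :=
  (hg.fderiv_right (m := ∞) (by simp)).clm_apply contDiff_const

theorem cePy_hasDerivAt {g : ℝ × ℝ → V} (hg : ContDiff ℝ ∞ g) (u w : ℝ) :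
    HasDerivAt (fun w => g (u, w)) (cePy g (u, w)) w := by
  have h1 : HasFDerivAt g (fderiv ℝ g (u, w)) (u, w) := (hg.differentiable (by simp) _).hasFDerivAt
  exact h1.comp_hasDerivAt w ((hasDerivAt_const w u).prodMk (hasDerivAt_id w))

theorem cePu_hasDerivAt {g : ℝ × ℝ → V} (hg : ContDiff ℝ ∞ g) (u w : ℝ) :
    HasDerivAt (fun u => g (u, w)) (cePu g (u, w)) u := by
  have h1 : HasFDerivAt g (fderiv ℝ g (u, w)) (u, w) := (hg.differentiable (by simp) _).hasFDerivAt
  exact h1.comp_hasDerivAt u ((hasDerivAt_id u).prodMk (hasDerivAt_const u w))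

theorem cePyPu {g : ℝ × ℝ → V} (hg : ContDiff ℝ ∞ g) : cePy (cePu g) = cePu (cePy g) := by
  have hd : Differentiable ℝ (fderiv ℝ g) := (hg.fderiv_right (m := ∞) (by simp)).differentiable (by simp)
  funext p
  have key : ∀ a b : ℝ × ℝ, fderiv ℝ (fun q => fderiv ℝ g q a) p b = fderiv ℝ (fderiv ℝ g) p b a := by
    intro a b
    have := ((hd p).hasFDerivAt.clm_apply (hasFDerivAt_const a p)).fderiv
    rw [this]; simp
  have hsym : IsSymmSndFDerivAt ℝ g p := by
    apply (hg.contDiffAt (x := p)).isSymmSndFDerivAt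
    simp
    exact WithTop.coe_le_coe.2 le_top
  show fderiv ℝ (fun q => fderiv ℝ g q (1, 0)) p (0, 1) = fderiv ℝ (fun q => fderiv ℝ g q (0, 1)) p (1, 0)
  rw [key, key]
  exact hsym _ _

theorem ce_hadamard [CompleteSpace V] {g : ℝ × ℝ → V} (hg : ContDiff ℝ ∞ g) :
    ∃ k : ℝ × ℝ → V, ContDiff ℝ ∞ k ∧ ∀ u w, g (u, w) = g (u, 0) + w • k (u, w) := by
  refine ⟨fun p => ∫ t in (0:ℝ)..1, cePy g (p.1, t * p.2), ?_, ?_⟩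
  · refine ce_contDiff_param (E := ℝ × ℝ) (fun q => cePy g (q.1.1, q.2 * q.1.2)) ?_
    have := cePy_smooth hg
    fun_prop
  · intro u w
    have h1 : ∀ t ∈ uIcc (0:ℝ) 1, HasDerivAt (fun t => g (u, t * w)) (w • cePy g (u, t * w)) t := by
      intro t _
      have := (cePy_hasDerivAt hg u (t * w)).scomp t ((hasDerivAt_id t).mul_const w)
      simpa [Function.comp_def] using this
    have hi : IntervalIntegrable (fun t => w • cePy g (u, t * w)) MeasureTheory.volume 0 1 := by
      have := (cePy_smooth hg).continuous
      apply Continuous.intervalIntegrable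
      fun_prop
    have := intervalIntegral.integral_eq_sub_of_hasDerivAt h1 hi
    simp only [intervalIntegral.integral_smul, one_mul, zero_mul] at this
    rw [this]; abel
end

section
variable {V : Type} [NormedAddCommGroup V] [NormedSpace ℝ V]

theorem cePy_iter_smooth {g : ℝ × ℝ → V} (hg : ContDiff ℝ ∞ g) (n : ℕ) : ContDiff ℝ ∞ (cePy^[n] g) := by
  induction n with
  | zero => exact hg
  | succ n ih => rw [Function.iterate_succ_apply']; exact cePy_smooth ih

theorem cePy_iter_eq_fderiv {g : ℝ × ℝ → V} (hg : ContDiff ℝ ∞ g) (n : ℕ) :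
    ∀ p, cePy^[n] g p = iteratedFDeriv ℝ n g p (fun _ => (0, 1)) := by
  induction n with
  | zero => intro p; simp
  | succ n ih =>
    intro p
    rw [Function.iterate_succ_apply', iteratedFDeriv_succ_apply_left]
    have : cePy^[n] g = fun q => ContinuousMultilinearMap.apply ℝ (fun _ : Fin n => ℝ × ℝ) V (fun _ => (0, 1)) (iteratedFDeriv ℝ n g q) := by
      funext q; rw [ih q]; rfl
    have hd : DifferentiableAt ℝ (iteratedFDeriv ℝ n g) p :=
      (hg.differentiable_iteratedFDeriv (by exact_mod_cast WithTop.coe_lt_top n)) p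
    unfold cePy at this ⊢
    rw [this]
    have h5 := (((ContinuousMultilinearMap.apply ℝ (fun _ : Fin n => ℝ × ℝ) V (fun _ => (0, 1))).hasFDerivAt).comp p hd.hasFDerivAt).fderiv
    simp only [Function.comp_def] at h5
    rw [h5]
    rfl

theorem cePy_iter_eq_deriv {g : ℝ × ℝ → V} (hg : ContDiff ℝ ∞ g) (n : ℕ) (u : ℝ) :
    ∀ y, cePy^[n] g (u, y) = iteratedDeriv n (fun w => g (u, w)) y := by
  induction n with
  | zero => intro p; simp
  | succ n ih =>
    intro y
    rw [Function.iterate_succ_apply', iteratedDeriv_succ, ← (cePy_hasDerivAt (cePy_iter_smooth hg n) u y).deriv]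
    congr 1
    funext w
    exact ih w

theorem ce_borel [CompleteSpace V] (c : ℕ → ℝ → V) (hc : ∀ n, ContDiff ℝ ∞ (c n))
    (hs : ∀ n, HasCompactSupport (c n)) :
    ∃ B : ℕ → ℝ × ℝ → V, (∀ n, ContDiff ℝ ∞ (B n)) ∧ (∀ n, cePy (B n) = B (n+1)) ∧
      ∀ n u, B n (u, 0) = c n u := by
  let χ : ContDiffBump (0:ℝ) := ⟨1, 2, one_pos, one_lt_two⟩
  have hχ : ContDiff ℝ ∞ χ := χ.contDiff
  let Ψ : ℕ → ℝ × ℝ → V := fun k p => (((k.factorial : ℝ)⁻¹ * p.2 ^ k) * χ p.2) • c k p.1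
  have hΨ : ∀ k, ContDiff ℝ ∞ (Ψ k) := by
    intro k
    have := hc k
    simp only [Ψ]
    fun_prop
  have hΨs : ∀ k, HasCompactSupport (Ψ k) := by
    intro k
    refine HasCompactSupport.intro ((hs k).isCompact.prod (isCompact_closedBall (0:ℝ) 2)) ?_
    rintro ⟨u, y⟩ h
    simp only [mem_prod, not_and_or] at h
    rcases h with h | h
    · simp [Ψ, image_eq_zero_of_notMem_tsupport h]
    · have : χ y = 0 := χ.zero_of_le_dist (by
        simp only [Metric.mem_closedBall, not_le] at h; exact h.le)
      simp [Ψ, this]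
  have hbd : ∀ j k, ∃ C : ℝ, 0 ≤ C ∧ ∀ x, ‖iteratedFDeriv ℝ j (Ψ k) x‖ ≤ C := by
    intro j k
    obtain ⟨C, hC⟩ := ((hΨs k).iteratedFDeriv (𝕜 := ℝ) j).exists_bound_of_continuous
      ((hΨ k).continuous_iteratedFDeriv (by exact_mod_cast le_top))
    exact ⟨C, (norm_nonneg _).trans (hC 0), hC⟩
  choose C hC0 hC using hbd
  let lam : ℕ → ℝ := fun k => 1 + 2 ^ k * ∑ j ∈ Finset.range k, C j k
  have hS0 : ∀ k, 0 ≤ ∑ j ∈ Finset.range k, C j k := fun k => Finset.sum_nonneg fun j _ => hC0 j k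
  have hlam : ∀ k, 1 ≤ lam k := by
    intro k
    have := mul_nonneg (pow_nonneg (zero_le_two (α := ℝ)) k) (hS0 k)
    simp only [lam]; linarith
  have hlam0 : ∀ k, 0 < lam k := fun k => one_pos.trans_le (hlam k)
  let L : ℕ → (ℝ × ℝ →L[ℝ] ℝ × ℝ) := fun k =>
    (ContinuousLinearMap.id ℝ ℝ).prodMap (lam k • ContinuousLinearMap.id ℝ ℝ)
  have hLapp : ∀ k u y, L k (u, y) = (u, lam k * y) := fun k u y => rfl
  have hL : ∀ k, ‖L k‖ ≤ lam k := by
    intro k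
    refine ContinuousLinearMap.opNorm_le_bound _ (hlam0 k).le ?_
    rintro ⟨u, y⟩
    simp only [hLapp, Prod.norm_def, Real.norm_eq_abs, abs_mul, abs_of_pos (hlam0 k)]
    apply max_le
    · calc |u| ≤ 1 * max |u| |y| := by simp
        _ ≤ _ := by gcongr; exact hlam k
    · have := hlam0 k
      gcongr; exact le_max_right _ _
  let f : ℕ → ℝ × ℝ → V := fun k => ((lam k)⁻¹ ^ k) • (Ψ k ∘ L k)
  have hf : ∀ k, ContDiff ℝ ∞ (f k) := fun k => ((hΨ k).comp (L k).contDiff).const_smul _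
  let v : ℕ → ℕ → ℝ := fun j k => (lam k)⁻¹ ^ k * (C j k * lam k ^ j)
  have hv : ∀ j k x, ‖iteratedFDeriv ℝ j (f k) x‖ ≤ v j k := by
    intro j k x
    have h1 : ContDiffAt ℝ j (Ψ k ∘ L k) x := (((hΨ k).comp (L k).contDiff).of_le (by exact_mod_cast le_top)).contDiffAt
    simp only [f]
    rw [iteratedFDeriv_const_smul_apply h1, norm_smul]
    rw [(L k).iteratedFDeriv_comp_right (hΨ k) x (i := j) (by exact_mod_cast le_top)]
    have h2 := ContinuousMultilinearMap.norm_compContinuousLinearMap_le (iteratedFDeriv ℝ j (Ψ k) (L k x)) (fun _ => L k)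
    rw [Real.norm_of_nonneg (by have := hlam0 k; positivity)]
    simp only [v]
    have := hlam0 k
    gcongr
    refine h2.trans ?_
    simp only [Finset.prod_const, Finset.card_univ, Fintype.card_fin]
    gcongr
    · exact hC0 j k
    · exact hC _ _ _
    · exact hL k
  have hvs : ∀ j, Summable (v j) := by
    intro j
    refine Summable.of_norm_bounded_eventually_nat (summable_geometric_two) ?_
    filter_upwards [eventually_gt_atTop j] with k hk
    have h0 := hlam0 k
    rw [Real.norm_of_nonneg (by have := hC0 j k; positivity)]
    have h1 : C j k * 2 ^ k ≤ lam k := by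
      have : C j k ≤ ∑ j ∈ Finset.range k, C j k :=
        Finset.single_le_sum (f := fun j => C j k) (fun i _ => hC0 i k) (Finset.mem_range.2 hk)
      have h2 : (0:ℝ) < 2 ^ k := by positivity
      simp only [lam]; nlinarith
    have h3 : lam k ^ j * lam k ≤ lam k ^ k := by
      rw [← pow_succ]; exact pow_le_pow_right₀ (hlam k) hk
    simp only [v]
    rw [inv_pow, one_div, inv_pow, inv_mul_le_iff₀ (by positivity), ← div_eq_mul_inv, le_div_iff₀ (by positivity)]
    calc C j k * lam k ^ j * 2 ^ k = (C j k * 2 ^ k) * lam k ^ j := by ring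
      _ ≤ lam k * lam k ^ j := by gcongr
      _ ≤ _ := by linarith
  have hB : ContDiff ℝ ∞ (fun x => ∑' k, f k x) :=
    contDiff_tsum (N := ⊤) hf (fun j _ => hvs j) (fun j k x _ => hv j k x)
  refine ⟨fun n => cePy^[n] (fun x => ∑' k, f k x), fun n => cePy_iter_smooth hB n, fun n => ?_, fun n u => ?_⟩
  · simp only [Function.iterate_succ_apply']
  · show cePy^[n] (fun x => ∑' k, f k x) (u, 0) = c n u
    rw [cePy_iter_eq_fderiv hB, iteratedFDeriv_tsum_apply (N := ⊤) hf (fun j _ => hvs j) (fun j k x _ => hv j k x) le_top]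
    have hsum : Summable (fun k => iteratedFDeriv ℝ n (f k) (u, 0)) :=
      .of_norm_bounded (hvs n) fun k => hv n k _
    have h1 := (ContinuousMultilinearMap.apply ℝ (fun _ : Fin n => ℝ × ℝ) V (fun _ => (0, 1))).map_tsum hsum
    simp only [ContinuousMultilinearMap.apply_apply] at h1
    rw [h1]
    have h2 : ∀ k, iteratedFDeriv ℝ n (f k) (u, 0) (fun _ => (0, 1)) = if k = n then c n u else 0 := by
      intro k
      rw [← cePy_iter_eq_fderiv (hf k), cePy_iter_eq_deriv (hf k)]
      have h3 : (fun w => f k (u, w)) =ᶠ[𝓝 0] fun w => w ^ k • ((k.factorial : ℝ)⁻¹ • c k u) := by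
        have : Metric.ball (0:ℝ) (lam k)⁻¹ ∈ 𝓝 (0:ℝ) := Metric.ball_mem_nhds _ (inv_pos.2 (hlam0 k))
        filter_upwards [this] with w hw
        have h0 := hlam0 k
        have hone : χ (lam k * w) = 1 := χ.one_of_mem_closedBall (by
          simp only [Metric.mem_closedBall, dist_zero_right, Real.norm_eq_abs, abs_mul, abs_of_pos h0, χ]
          simp only [Metric.mem_ball, dist_zero_right, Real.norm_eq_abs] at hw
          have := mul_lt_mul_of_pos_left hw h0
          rw [mul_inv_cancel₀ h0.ne'] at this
          exact this.le)
        simp only [f, Ψ, Pi.smul_apply, Function.comp, hLapp, hone, smul_smul]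
        congr 1
        rw [mul_pow, inv_pow]
        field_simp
      rw [h3.iteratedDeriv_eq]
      have h4 : iteratedDeriv n (fun w : ℝ => w ^ k • ((k.factorial : ℝ)⁻¹ • c k u)) 0 = iteratedDeriv n (fun w : ℝ => w ^ k) 0 • ((k.factorial : ℝ)⁻¹ • c k u) := by
        simp only [← iteratedDerivWithin_univ]
        exact iteratedDerivWithin_smul_const (mem_univ _) uniqueDiffOn_univ (contDiff_id.pow k).contDiffWithinAt _
      rw [h4, iteratedDeriv_eq_iterate, iter_deriv_pow]
      rcases lt_trichotomy k n with h | h | h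
      · have : ∏ i ∈ Finset.range n, ((k:ℝ) - i) = 0 :=
          Finset.prod_eq_zero (Finset.mem_range.2 h) (sub_self _)
        simp [this, h.ne]
      · subst h
        have h6 : ∏ i ∈ Finset.range k, ((k:ℝ) - i) = k.factorial := by
          rw [← Nat.descFactorial_self, Nat.descFactorial_eq_prod_range, Nat.cast_prod]
          refine Finset.prod_congr rfl fun i hi => ?_
          rw [Nat.cast_sub (Finset.mem_range.1 hi).le]
        simp [h6, smul_smul, Nat.factorial_ne_zero]
      · simp [h.ne', Nat.sub_ne_zero_of_lt h]
    simp only [h2]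
    simp
end

section
variable {V : Type} [NormedAddCommGroup V] [NormedSpace ℝ V]

def CeMatch (E B : ℕ → ℝ × ℝ → V) : Prop :=
  (∀ n, ContDiff ℝ ∞ (E n)) ∧ (∀ n, ContDiff ℝ ∞ (B n)) ∧
  (∀ n u w, cePy (E n) (u, w) = (2 * w) • E (n+1) (u, w)) ∧ (∀ n, cePy (B n) = B (n+1)) ∧
  ∀ n u, E n (u, 0) = B n (u, 0)

noncomputable def ceGlue (e b : ℝ × ℝ → V) : ℝ × ℝ → V := fun p => if 0 ≤ p.2 then e (p.1, √p.2) else b p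

theorem CeMatch.shift {E B : ℕ → ℝ × ℝ → V} (h : CeMatch E B) :
    CeMatch (fun n => E (n+1)) (fun n => B (n+1)) :=
  ⟨fun n => h.1 _, fun n => h.2.1 _, fun n => h.2.2.1 _, fun n => h.2.2.2.1 _, fun n => h.2.2.2.2 _⟩

theorem CeMatch.pu {E B : ℕ → ℝ × ℝ → V} (h : CeMatch E B) :
    CeMatch (fun n => cePu (E n)) (fun n => cePu (B n)) := by
  refine ⟨fun n => cePu_smooth (h.1 _), fun n => cePu_smooth (h.2.1 _), fun n u w => ?_, fun n => ?_, fun n u => ?_⟩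
  · rw [cePyPu (h.1 n), ← (cePu_hasDerivAt (cePy_smooth (h.1 n)) u w).deriv]
    simp only [h.2.2.1 n]
    exact ((cePu_hasDerivAt (h.1 (n+1)) u w).const_smul (2 * w)).deriv
  · rw [cePyPu (h.2.1 n), h.2.2.2.1]
  · show cePu (E n) (u, 0) = cePu (B n) (u, 0)
    rw [← (cePu_hasDerivAt (h.1 n) u 0).deriv, ← (cePu_hasDerivAt (h.2.1 n) u 0).deriv]
    simp only [h.2.2.2.2 n]

theorem CeMatch.glue_continuous {E B : ℕ → ℝ × ℝ → V} (h : CeMatch E B) :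
    Continuous (ceGlue (E 0) (B 0)) := by
  have : ceGlue (E 0) (B 0) = fun p => E 0 (p.1, √p.2) + B 0 (p.1, min p.2 0) - B 0 (p.1, 0) := by
    funext ⟨u, y⟩
    simp only [ceGlue]
    split_ifs with hy
    · simp [min_eq_right hy]
    · simp [min_eq_left (not_le.1 hy).le, Real.sqrt_eq_zero_of_nonpos (not_le.1 hy).le, h.2.2.2.2 0 u]
  rw [this]
  have h1 := (h.1 0).continuous
  have h2 := (h.2.1 0).continuous
  fun_prop

theorem CeMatch.glue_hasDerivAt_fst {E B : ℕ → ℝ × ℝ → V} (h : CeMatch E B) (u y : ℝ) :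
    HasDerivAt (fun u => ceGlue (E 0) (B 0) (u, y)) (ceGlue (cePu (E 0)) (cePu (B 0)) (u, y)) u := by
  by_cases hy : 0 ≤ y
  · simp only [ceGlue, hy, if_true]
    exact cePu_hasDerivAt (h.1 0) u _
  · simp only [ceGlue, hy, if_false]
    exact cePu_hasDerivAt (h.2.1 0) u _

theorem CeMatch.glue_hasDerivAt_snd {E B : ℕ → ℝ × ℝ → V} (h : CeMatch E B) (u y : ℝ) :
    HasDerivAt (fun y => ceGlue (E 0) (B 0) (u, y)) (ceGlue (E 1) (B 1) (u, y)) y := by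
  have hne : ∀ y ≠ 0, HasDerivAt (fun y => ceGlue (E 0) (B 0) (u, y)) (ceGlue (E 1) (B 1) (u, y)) y := by
    intro y hy
    rcases lt_or_gt_of_ne hy with hy | hy
    · have h1 := cePy_hasDerivAt (h.2.1 0) u y
      rw [h.2.2.2.1] at h1
      have h2 : ceGlue (E 1) (B 1) (u, y) = B 1 (u, y) := by simp [ceGlue, hy]
      rw [h2]
      refine h1.congr_of_eventuallyEq ?_
      filter_upwards [eventually_lt_nhds hy] with z hz
      simp [ceGlue, hz]
    · have h1 := (cePy_hasDerivAt (h.1 0) u (√y)).scomp y (Real.hasDerivAt_sqrt hy.ne')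
      rw [h.2.2.1, smul_smul] at h1
      have h2 : ceGlue (E 1) (B 1) (u, y) = E 1 (u, √y) := by simp [ceGlue, hy.le]
      have h3 : 1 / (2 * √y) * (2 * √y) = 1 := by
        have := Real.sqrt_pos.2 hy
        field_simp
      rw [h3, one_smul] at h1
      rw [h2]
      refine h1.congr_of_eventuallyEq ?_
      filter_upwards [eventually_gt_nhds hy] with z hz
      simp [ceGlue, le_of_lt hz]
  by_cases hy : y = 0
  · subst hy
    have hc : Continuous fun y : ℝ => (u, y) := by fun_prop
    exact hasDerivAt_of_hasDerivAt_of_ne (g := fun y => ceGlue (E 1) (B 1) (u, y)) hne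
      (h.glue_continuous.comp hc).continuousAt
      (h.shift.glue_continuous.comp hc).continuousAt
  · exact hne y hy

theorem CeMatch.glue_contDiff_nat (n : ℕ) : ∀ {E B : ℕ → ℝ × ℝ → V} (h : CeMatch E B),
    ContDiff ℝ n (ceGlue (E 0) (B 0)) := by
  induction n with
  | zero => intro E B h; exact contDiff_zero.2 h.glue_continuous
  | succ n ih =>
    intro E B h
    have hu : ContDiff ℝ n (ceGlue (cePu (E 0)) (cePu (B 0))) := ih h.pu
    have hy : ContDiff ℝ n (ceGlue (E 1) (B 1)) := ih h.shift
    have key := contDiff_succ_iff_hasFDerivAt (𝕜 := ℝ) (n := n) (f := ceGlue (E 0) (B 0))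
    push_cast
    rw [key]
    refine ⟨fun p => (ContinuousLinearMap.fst ℝ ℝ ℝ).smulRight (ceGlue (cePu (E 0)) (cePu (B 0)) p) +
      (ContinuousLinearMap.snd ℝ ℝ ℝ).smulRight (ceGlue (E 1) (B 1) p), ?_, ?_⟩
    · exact (contDiff_const.smulRight hu).add (contDiff_const.smulRight hy)
    · intro p
      have hsp : Continuous fun v : V => ContinuousLinearMap.toSpanSingleton ℝ v :=
        (ContinuousLinearMap.toSpanSingletonCLE (𝕜 := ℝ) (E := V)).continuous
      have hS := hasStrictFDerivAt_uncurry_coprod (𝕜 := ℝ) (u := p) (f := fun u y => ceGlue (E 0) (B 0) (u, y))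
        (f₁ := fun u y => ContinuousLinearMap.toSpanSingleton ℝ (ceGlue (cePu (E 0)) (cePu (B 0)) (u, y)))
        (f₂ := fun u y => ContinuousLinearMap.toSpanSingleton ℝ (ceGlue (E 1) (B 1) (u, y)))
        (Eventually.of_forall fun v => (h.glue_hasDerivAt_fst v.1 v.2).hasFDerivAt)
        (Eventually.of_forall fun v => (h.glue_hasDerivAt_snd v.1 v.2).hasFDerivAt)
        (hsp.comp hu.continuous).continuousAt
        (hsp.comp hy.continuous).continuousAt
      refine (hS.hasFDerivAt).congr_fderiv ?_
      ext <;> simp [Function.HasUncurry.uncurry]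

theorem ce_odd_div [CompleteSpace V] {o : ℝ × ℝ → V} {R : ℝ} (ho : ContDiff ℝ ∞ o)
    (hodd : ∀ u w, o (u, -w) = - o (u, w)) (hR : ∀ u w, R ≤ |u| → o (u, w) = 0) :
    ∃ k : ℝ × ℝ → V, ContDiff ℝ ∞ k ∧ (∀ u w, k (u, -w) = k (u, w)) ∧ (∀ u w, R ≤ |u| → k (u, w) = 0) ∧
      ∀ u w, o (u, w) = w • k (u, w) := by
  obtain ⟨k, hk, hko⟩ := ce_hadamard ho
  have h0 : ∀ u, o (u, 0) = 0 := by
    intro u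
    have := hodd u 0
    rw [neg_zero] at this
    have h2 : (2 : ℝ) • o (u, 0) = 0 := by
      rw [two_smul]
      nth_rewrite 1 [this]
      simp
    exact (smul_eq_zero.1 h2).resolve_left two_ne_zero
  simp only [h0, zero_add] at hko
  refine ⟨k, hk, fun u w => ?_, fun u w hu => ?_, hko⟩
  · by_cases hw : w = 0
    · simp [hw]
    · have := hodd u w
      rw [hko, hko, neg_smul, neg_inj] at this
      exact smul_right_injective V hw this
  · have hc : Continuous fun w => k (u, w) := hk.continuous.comp (by fun_prop)
    have : (fun w => k (u, w)) = fun _ => 0 := by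
      refine hc.ext_on (dense_compl_singleton (0:ℝ)) continuous_const fun w hw => ?_
      have := hko u w
      rw [hR u w hu] at this
      exact (smul_eq_zero.1 this.symm).resolve_left hw
    exact congrFun this w

def CeEven (R : ℝ) (e : ℝ × ℝ → V) : Prop :=
  ContDiff ℝ ∞ e ∧ (∀ u w, e (u, -w) = e (u, w)) ∧ (∀ u w, R ≤ |u| → e (u, w) = 0)

theorem CeEven.step [CompleteSpace V] {R : ℝ} {e : ℝ × ℝ → V} (he : CeEven R e) :
    ∃ k, CeEven R k ∧ ∀ u w, cePy e (u, w) = (2 * w) • k (u, w) := by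
  obtain ⟨k, hk, hke, hkR, hko⟩ := ce_odd_div (o := cePy e) (R := R) (cePy_smooth he.1) (fun u w => by
      have h1 := (cePy_hasDerivAt he.1 u (-w)).scomp w (hasDerivAt_neg w)
      have h2 : (fun w => e (u, w)) ∘ Neg.neg = fun w => e (u, w) := by
        funext w; exact he.2.1 u w
      rw [h2] at h1
      have := h1.unique (cePy_hasDerivAt he.1 u w)
      rw [← this]; simp) (fun u w hu => by
      rw [← (cePy_hasDerivAt he.1 u w).deriv]
      simp [he.2.2 u _ hu])
  refine ⟨fun p => (1/2 : ℝ) • k p, ⟨contDiff_const.smul hk, fun u w => by simp only [hke], fun u w hu => by simp [hkR u w hu]⟩, fun u w => ?_⟩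
  rw [hko, smul_smul]
  congr 1
  ring

theorem ce_whitney_even [CompleteSpace V] {R : ℝ} {e : ℝ × ℝ → V} (he : CeEven R e) :
    ∃ a : ℝ × ℝ → V, ContDiff ℝ ∞ a ∧ ∀ u w, e (u, w) = a (u, w ^ 2) := by
  choose st hst1 hst2 using fun x : {e : ℝ × ℝ → V // CeEven R e} => x.2.step
  let S : {e : ℝ × ℝ → V // CeEven R e} → {e : ℝ × ℝ → V // CeEven R e} := fun x => ⟨st x, hst1 x⟩
  let E : ℕ → ℝ × ℝ → V := fun n => (S^[n] ⟨e, he⟩).1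
  have hE : ∀ n, CeEven R (E n) := fun n => (S^[n] ⟨e, he⟩).2
  have hE' : ∀ n u w, cePy (E n) (u, w) = (2 * w) • E (n+1) (u, w) := by
    intro n u w
    simp only [E, Function.iterate_succ_apply']
    exact hst2 _ u w
  obtain ⟨B, hB, hB', hB0⟩ := ce_borel (fun n u => E n (u, 0))
    (fun n => (hE n).1.comp (contDiff_id.prodMk contDiff_const))
    (fun n => HasCompactSupport.intro (isCompact_Icc (a := -R) (b := R)) fun u hu => (hE n).2.2 u 0 (by
      by_contra hlt
      exact hu (abs_le.1 (not_le.1 hlt).le)))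
  have hm : CeMatch E B := ⟨fun n => (hE n).1, hB, hE', hB', fun n u => (hB0 n u).symm⟩
  refine ⟨ceGlue (E 0) (B 0), contDiff_infty.2 fun n => CeMatch.glue_contDiff_nat n hm, fun u w => ?_⟩
  simp only [ceGlue, sq_nonneg, if_true, Real.sqrt_sq_eq_abs]
  rcases abs_choice w with h | h <;> rw [h]
  · rfl
  · rw [(hE 0).2.1]; rfl

theorem ce_whitney [CompleteSpace V] {R : ℝ} {g : ℝ × ℝ → V} (hg : ContDiff ℝ ∞ g)
    (hR : ∀ u w, R ≤ |u| → g (u, w) = 0) :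
    ∃ a b : ℝ × ℝ → V, ContDiff ℝ ∞ a ∧ ContDiff ℝ ∞ b ∧
      ∀ u w, g (u, w) = a (u, w ^ 2) + w • b (u, w ^ 2) := by
  have hg' : ContDiff ℝ ∞ fun p : ℝ × ℝ => g (p.1, -p.2) := hg.comp (by fun_prop)
  obtain ⟨a, ha, hae⟩ := ce_whitney_even (R := R) (e := fun p => (1/2 : ℝ) • (g p + g (p.1, -p.2)))
    ⟨contDiff_const.smul (hg.add hg'), fun u w => by simp [add_comm], fun u w hu => by simp [hR u _ hu]⟩
  obtain ⟨k, hk, hke, hkR, hko⟩ := ce_odd_div (R := R) (o := fun p => (1/2 : ℝ) • (g p - g (p.1, -p.2)))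
    (contDiff_const.smul (hg.sub hg')) (fun u w => by simp only [neg_neg]; rw [← smul_neg, neg_sub]) (fun u w hu => by simp [hR u _ hu])
  obtain ⟨b, hb, hbe⟩ := ce_whitney_even (R := R) (e := k) ⟨hk, hke, hkR⟩
  refine ⟨a, b, ha, hb, fun u w => ?_⟩
  rw [← hae, ← hbe, ← hko, ← smul_add]
  simp only [add_add_sub_cancel]
  rw [← two_smul ℝ (g (u, w)), smul_smul]; norm_num
end

theorem ce_complete_basis {m : ℕ} (hm : 3 ≤ m) (v : Fin 3 → Fin m → ℝ) (hv : LinearIndependent ℝ v) :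
    ∃ b : Module.Basis (Fin m) ℝ (Fin m → ℝ), ∀ i : Fin 3, b (Fin.castLE hm i) = v i := by
  classical
  obtain ⟨k, rfl⟩ := Nat.exists_eq_add_of_le hm
  let b0 := Module.Basis.sumExtend hv
  haveI := Module.Finite.finite_basis b0
  have hfin : Finite (Module.Basis.sumExtendIndex hv) := Finite.of_injective (Sum.inr (α := Fin 3)) Sum.inr_injective
  letI := Fintype.ofFinite (Module.Basis.sumExtendIndex hv)
  have hc := Module.finrank_eq_card_basis b0
  have hc2 : Fintype.card (Module.Basis.sumExtendIndex hv) = k := by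
    rw [Fintype.card_sum, Module.finrank_fin_fun, Fintype.card_fin] at hc; omega
  let e := (Equiv.sumCongr (Equiv.refl (Fin 3)) (Fintype.equivFinOfCardEq hc2)).trans finSumFinEquiv
  refine ⟨b0.reindex e, fun i => ?_⟩
  rw [Module.Basis.reindex_apply]
  have : e.symm (Fin.castLE hm i) = Sum.inl i := by
    rw [Equiv.symm_apply_eq]
    simp [e]
    rfl
  rw [this]
  show Module.Basis.sumExtend hv (Sum.inl i) = v i
  simp only [Module.Basis.sumExtend, Module.Basis.reindex_apply, Equiv.symm_symm, Module.Basis.coe_extend]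
  rfl

theorem ce_germ_of_inverse {m : ℕ} {f : ℝ × ℝ → Fin m → ℝ} {g : ℝ × ℝ → Fin m → ℝ} {t₀ : ℝ}
    (hg : Continuous g) (hg0 : g (0, 0) = 0)
    (T : (Fin m → ℝ) → Fin m → ℝ) (hT : ContDiff ℝ ∞ T)
    (M : (Fin m → ℝ) ≃L[ℝ] (Fin m → ℝ)) (hTM : HasFDerivAt T (M : (Fin m → ℝ) →L[ℝ] (Fin m → ℝ)) 0)
    (hf : ∀ᶠ p in 𝓝 (t₀, (0:ℝ)), f p = T (g (p.1 - t₀ + p.2, p.2))) :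
    GermDiffeomorphic f (t₀, 0) g (0, 0) := by
  let e := hT.contDiffAt.toOpenPartialHomeomorph T hTM (by simp)
  have he : ∀ x, e x = T x := fun x => rfl
  have h0 : (0 : Fin m → ℝ) ∈ e.source := hT.contDiffAt.mem_toOpenPartialHomeomorph_source hTM (by simp)
  let S : Set (Fin m → ℝ) := e.source ∩ {x | fderiv ℝ T x ∈ range ((↑) : ((Fin m → ℝ) ≃L[ℝ] (Fin m → ℝ)) → _)}
  have hS : IsOpen S := e.open_source.inter
    (ContinuousLinearEquiv.isOpen.preimage (hT.continuous_fderiv (by simp)))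
  have h0S : (0 : Fin m → ℝ) ∈ S := ⟨h0, ⟨M, hTM.fderiv.symm⟩⟩
  have hSs : S ⊆ e.source := inter_subset_left
  let V : Set (Fin m → ℝ) := e '' S
  have hV : IsOpen V := e.isOpen_image_of_subset_source hS hSs
  let σ : ℝ × ℝ → ℝ × ℝ := fun p => (p.1 - t₀ + p.2, p.2)
  let σi : ℝ × ℝ → ℝ × ℝ := fun p => (t₀ + p.1 - p.2, p.2)
  have hσ : ContDiff ℝ ∞ σ := by fun_prop
  have hσi : ContDiff ℝ ∞ σi := by fun_prop
  have hl : ∀ x, σi (σ x) = x := fun x => by ext <;> simp only [σ, σi] <;> ring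
  have hr : ∀ x, σ (σi x) = x := fun x => by ext <;> simp only [σ, σi] <;> ring
  have hσ0 : σ (t₀, 0) = (0, 0) := by simp [σ]
  obtain ⟨U0, hU0f, hU0, hU0m⟩ := eventually_nhds_iff.1 hf
  let U : Set (ℝ × ℝ) := U0 ∩ (fun p => g (σ p)) ⁻¹' S
  have hU : IsOpen U := hU0.inter (hS.preimage (hg.comp hσ.continuous))
  have hUm : (t₀, (0:ℝ)) ∈ U := ⟨hU0m, by simpa [hσ0, hg0] using h0S⟩
  have hfV : ∀ x ∈ U, f x ∈ V := fun x hx => ⟨g (σ x), hx.2, by rw [he]; exact (hU0f x hx.1).symm⟩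
  have hτf : ∀ x ∈ U, e.symm (f x) = g (σ x) := fun x hx => by
    rw [hU0f x hx.1, ← he]
    exact e.left_inv (hSs hx.2)
  have hτV : e.symm '' V = S := by
    ext x; constructor
    · rintro ⟨_, ⟨y, hy, rfl⟩, rfl⟩
      rwa [e.left_inv (hSs hy)]
    · intro hx
      exact ⟨e x, ⟨x, hx, rfl⟩, e.left_inv (hSs hx)⟩
  refine ⟨U, V, σ, e.symm, ⟨hU, ?_, hσ.contDiffOn, σi, hσi.contDiffOn, fun x _ => hl x⟩,
    ⟨hV, hτV ▸ hS, ?_, T, hT.contDiffOn, ?_⟩, hUm, hfV _ hUm, hσ0, ?_, hfV, hτf⟩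
  · have : σ '' U = σi ⁻¹' U := by
      ext x; constructor
      · rintro ⟨y, hy, rfl⟩
        show σi (σ y) ∈ U
        rwa [hl]
      · intro hx; exact ⟨σi x, hx, hr x⟩
    rw [this]
    exact hU.preimage hσi.continuous
  · rintro _ ⟨x, hx, rfl⟩
    obtain ⟨L, hL⟩ := hx.2
    refine (e.contDiffAt_symm (f₀' := L) (e.map_source (hSs hx)) ?_ ?_).contDiffWithinAt
    · rw [e.left_inv (hSs hx), hL]
      exact (hT.differentiable (by simp) x).hasFDerivAt
    · exact hT.contDiffAt
  · rintro _ ⟨x, hx, rfl⟩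
    rw [e.left_inv (hSs hx)]; rfl
  · rw [hτf _ hUm, hσ0]

theorem ce_germ_of_form {m : ℕ} (hm : 3 ≤ m) {f : ℝ × ℝ → Fin m → ℝ} {t₀ : ℝ}
    {a c : ℝ × ℝ → Fin m → ℝ} (ha : ContDiff ℝ ∞ a) (hc : ContDiff ℝ ∞ c)
    (hind : LinearIndependent ℝ ![cePu a (0, 0), cePy a (0, 0), c (0, 0)])
    (hf : ∀ᶠ p in 𝓝 (t₀, (0:ℝ)), f p = a (p.1 - t₀ + p.2, p.2 ^ 2) + p.2 ^ 3 • c (p.1 - t₀ + p.2, p.2 ^ 2)) :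
    GermDiffeomorphic f (t₀, (0 : ℝ))
      (fun p : ℝ × ℝ => fun j : Fin m =>
        if j.val = 0 then p.1
        else if j.val = 1 then p.2 ^ 2
        else if j.val = 2 then p.2 ^ 3
        else 0)
      ((0 : ℝ), (0 : ℝ)) := by
  obtain ⟨b, hb⟩ := ce_complete_basis hm _ hind
  have hb0 := hb 0
  have hb1 := hb 1
  have hb2 := hb 2
  obtain ⟨k, rfl⟩ := Nat.exists_eq_add_of_le hm
  let i0 : Fin (3 + k) := Fin.castLE hm 0
  let i1 : Fin (3 + k) := Fin.castLE hm 1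
  let i2 : Fin (3 + k) := Fin.castLE hm 2
  let T : (Fin (3+k) → ℝ) → Fin (3+k) → ℝ := fun X =>
    a (X i0, X i1) + X i2 • c (X i0, X i1) + ∑ j : Fin k, X (Fin.natAdd 3 j) • b (Fin.natAdd 3 j)
  have hT : ContDiff ℝ ∞ T := by fun_prop
  refine ce_germ_of_inverse (t₀ := t₀) ?_ ?_ T hT b.equivFun.symm.toContinuousLinearEquiv ?_ ?_
  · refine continuous_pi fun j => ?_
    split_ifs <;> fun_prop
  · funext j; simp
  · let P : (Fin (3+k) → ℝ) →L[ℝ] ℝ × ℝ := (ContinuousLinearMap.proj i0).prod (ContinuousLinearMap.proj i1)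
    have hP : HasFDerivAt (fun X : Fin (3+k) → ℝ => (X i0, X i1)) P 0 := P.hasFDerivAt
    have h1 : HasFDerivAt a (fderiv ℝ a (0,0)) ((0 : Fin (3+k) → ℝ) i0, (0 : Fin (3+k) → ℝ) i1) :=
      (ha.differentiable (by simp) _).hasFDerivAt
    have h2 : HasFDerivAt c (fderiv ℝ c (0,0)) ((0 : Fin (3+k) → ℝ) i0, (0 : Fin (3+k) → ℝ) i1) :=
      (hc.differentiable (by simp) _).hasFDerivAt
    have h3 : HasFDerivAt (fun X : Fin (3+k) → ℝ => X i2) (ContinuousLinearMap.proj (R := ℝ) (φ := fun _ => ℝ) i2) 0 :=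
      (ContinuousLinearMap.proj (R := ℝ) (φ := fun _ : Fin (3+k) => ℝ) i2).hasFDerivAt
    let L : (Fin (3+k) → ℝ) →L[ℝ] (Fin (3+k) → ℝ) :=
      ∑ j : Fin k, (ContinuousLinearMap.proj (R := ℝ) (φ := fun _ : Fin (3+k) => ℝ) (Fin.natAdd 3 j)).smulRight (b (Fin.natAdd 3 j))
    have h4 : HasFDerivAt (fun X : Fin (3+k) → ℝ => ∑ j : Fin k, X (Fin.natAdd 3 j) • b (Fin.natAdd 3 j)) L 0 := by
      have := L.hasFDerivAt (x := 0)
      refine this.congr_of_eventuallyEq (Eventually.of_forall fun X => ?_)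
      simp [L, sum_apply]
    have h5 := ((h1.comp 0 hP).add (h3.smul (h2.comp 0 hP))).add h4
    refine h5.congr_fderiv ?_
    ext1 X
    have e1 : fderiv ℝ a (0, 0) (X i0, X i1) = X i0 • cePu a (0, 0) + X i1 • cePy a (0, 0) := by
      have : ((X i0, X i1) : ℝ × ℝ) = X i0 • (1, 0) + X i1 • (0, 1) := by ext <;> simp
      rw [this, map_add, map_smul, map_smul]; rfl
    have e2 : (b.equivFun.symm.toContinuousLinearEquiv : (Fin (3+k) → ℝ) →L[ℝ] (Fin (3+k) → ℝ)) X = ∑ j, X j • b j := by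
      simp [Module.Basis.equivFun_symm_apply]
    rw [e2, Fin.sum_univ_add, Fin.sum_univ_three]
    have f0 : b (Fin.castAdd k 0) = cePu a (0, 0) := hb0
    have f1 : b (Fin.castAdd k 1) = cePy a (0, 0) := hb1
    have f2 : b (Fin.castAdd k 2) = c (0, 0) := hb2
    rw [f0, f1, f2]
    simp [L, sum_apply, P, e1]
    rfl
  · filter_upwards [hf] with p hp
    rw [hp]
    have g0 : i0.val = 0 := rfl
    have g1 : i1.val = 1 := rfl
    have g2 : i2.val = 2 := rfl
    have g3 : ∀ j : Fin k, (Fin.natAdd 3 j).val = 3 + j.val := fun j => rfl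
    have g4 : ∀ j : ℕ, 3 + j ≠ 0 ∧ 3 + j ≠ 1 ∧ 3 + j ≠ 2 := fun j => by omega
    simp only [T, g0, g1, g2, g3, g4, if_true, if_false, one_ne_zero, two_ne_zero, zero_smul, Finset.sum_const_zero, add_zero, OfNat.ofNat_ne_one]

theorem ce_iteratedDeriv_smul {V : Type} [NormedAddCommGroup V] [NormedSpace ℝ V] (x : V) {k : ℝ → V}
    (hk : ContDiff ℝ ∞ k) (n : ℕ) (w : ℝ) :
    iteratedDeriv (n+1) (fun w => x + w • k w) w = ((n : ℝ)+1) • iteratedDeriv n k w + w • iteratedDeriv (n+1) k w := by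
  have hd : ∀ n w, HasDerivAt (iteratedDeriv n k) (iteratedDeriv (n+1) k w) w := fun n w => by
    rw [iteratedDeriv_succ]
    exact (hk.differentiable_iteratedDeriv n (by exact WithTop.coe_lt_coe.2 (WithTop.coe_lt_top n)) w).hasDerivAt
  induction n generalizing w with
  | zero =>
    rw [iteratedDeriv_one]
    have := ((hasDerivAt_id w).smul (hd 0 w)).const_add x
    simp only [id, iteratedDeriv_zero] at this
    refine this.deriv.trans ?_
    simp [add_comm]
  | succ n ih =>
    rw [iteratedDeriv_succ]
    have : iteratedDeriv (n+1) (fun w => x + w • k w) = fun w => ((n : ℝ)+1) • iteratedDeriv n k w + w • iteratedDeriv (n+1) k w := funext ih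
    rw [this]
    have h2 := ((hd n w).const_smul ((n:ℝ)+1)).add ((hasDerivAt_id w).smul (hd (n+1) w))
    refine h2.deriv.trans ?_
    push_cast
    simp only [id]
    module

section
variable {V : Type} [NormedAddCommGroup V] [NormedSpace ℝ V]

theorem ce_form [CompleteSpace V] {R : ℝ} {G : ℝ × ℝ → V} (hG : ContDiff ℝ ∞ G)
    (hR : ∀ u w, R ≤ |u| → G (u, w) = 0) (h0 : ∀ᶠ u in 𝓝 (0:ℝ), cePy G (u, 0) = 0) :
    ∃ a c : ℝ × ℝ → V, ContDiff ℝ ∞ a ∧ ContDiff ℝ ∞ c ∧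
      (∀ᶠ u in 𝓝 (0:ℝ), ∀ w, G (u, w) = a (u, w ^ 2) + w ^ 3 • c (u, w ^ 2)) ∧
      cePu a (0, 0) = cePu G (0, 0) ∧ (2 : ℝ) • cePy a (0, 0) = cePy (cePy G) (0, 0) ∧
      (6 : ℝ) • c (0, 0) = cePy (cePy (cePy G)) (0, 0) := by
  obtain ⟨a, b, ha, hb, hab⟩ := ce_whitney hG hR
  obtain ⟨c, hc, hbc⟩ := ce_hadamard hb
  obtain ⟨a1, ha1, haa1⟩ := ce_hadamard ha
  obtain ⟨a2, ha2, haa2⟩ := ce_hadamard ha1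
  have hb0 : ∀ u, cePy G (u, 0) = b (u, 0) := by
    intro u
    rw [← (cePy_hasDerivAt hG u 0).deriv]
    have h1 : (fun w => G (u, w)) = fun w => a (u, 0) + w • (w • a1 (u, w ^ 2) + b (u, w ^ 2)) := by
      funext w
      rw [hab, haa1]
      module
    have h2 := ce_iteratedDeriv_smul (a (u, 0)) (k := fun w => w • a1 (u, w ^ 2) + b (u, w ^ 2)) (by fun_prop) 0 0
    rw [h1, ← iteratedDeriv_one]
    simpa using h2
  have hform : ∀ᶠ u in 𝓝 (0:ℝ), ∀ w, G (u, w) = a (u, w ^ 2) + w ^ 3 • c (u, w ^ 2) := by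
    filter_upwards [h0] with u hu w
    rw [hb0] at hu
    rw [hab, hbc, hu]
    module
  refine ⟨a, c, ha, hc, hform, ?_, ?_⟩
  · rw [← (cePu_hasDerivAt hG 0 0).deriv, ← (cePu_hasDerivAt ha 0 0).deriv]
    congr 1
    funext u
    rw [hab]; simp
  · let k3 : ℝ → V := fun w => c (0, w ^ 2) + w • a2 (0, w ^ 2)
    let k2 : ℝ → V := fun w => a1 (0, 0) + w • k3 w
    let k1 : ℝ → V := fun w => 0 + w • k2 w
    have hk3 : ContDiff ℝ ∞ k3 := by fun_prop
    have hk2 : ContDiff ℝ ∞ k2 := by fun_prop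
    have hk1 : ContDiff ℝ ∞ k1 := by fun_prop
    have hGk : (fun w => G (0, w)) = fun w => a (0, 0) + w • k1 w := by
      funext w
      rw [hform.self_of_nhds w, haa1, haa2]
      simp only [k1, k2, k3]
      module
    have hay : cePy a (0, 0) = a1 (0, 0) := by
      rw [← (cePy_hasDerivAt ha 0 0).deriv, ← iteratedDeriv_one]
      have h2 := ce_iteratedDeriv_smul (a (0, 0)) (k := fun w => a1 (0, w)) (by fun_prop) 0 0
      simp only [← haa1] at h2
      simpa using h2
    have e2 := cePy_iter_eq_deriv hG 2 0 0
    have e3 := cePy_iter_eq_deriv hG 3 0 0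
    simp only [Function.iterate_succ, Function.comp_apply, Function.iterate_zero, id] at e2 e3
    rw [e2, e3, hGk, hay, ce_iteratedDeriv_smul _ hk1 1, ce_iteratedDeriv_smul _ hk2 0, ce_iteratedDeriv_smul _ hk1 2,
      ce_iteratedDeriv_smul _ hk2 1, ce_iteratedDeriv_smul _ hk3 0]
    constructor
    · simp [k2]; norm_num
    · simp [k3, smul_smul]; norm_num

noncomputable def ceD (g : ℝ × ℝ → V) : ℝ × ℝ → V := fun p => cePy g p - cePu g p

theorem ceD_smooth {g : ℝ × ℝ → V} (hg : ContDiff ℝ ∞ g) : ContDiff ℝ ∞ (ceD g) :=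
  (cePy_smooth hg).sub (cePu_smooth hg)

theorem cePu_sub {g h : ℝ × ℝ → V} (hg : ContDiff ℝ ∞ g) (hh : ContDiff ℝ ∞ h) :
    cePu (fun p => g p - h p) = fun p => cePu g p - cePu h p := by
  funext p
  simp only [cePu]
  rw [fderiv_fun_sub (hg.differentiable (by simp) p) (hh.differentiable (by simp) p)]; rfl

theorem cePy_sub {g h : ℝ × ℝ → V} (hg : ContDiff ℝ ∞ g) (hh : ContDiff ℝ ∞ h) :
    cePy (fun p => g p - h p) = fun p => cePy g p - cePy h p := by
  funext p
  simp only [cePy]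
  rw [fderiv_fun_sub (hg.differentiable (by simp) p) (hh.differentiable (by simp) p)]; rfl

theorem ceD_hasDerivAt {g : ℝ × ℝ → V} (hg : ContDiff ℝ ∞ g) (t w : ℝ) :
    HasDerivAt (fun w => g (t - w, w)) (ceD g (t - w, w)) w := by
  have h1 : HasFDerivAt g (fderiv ℝ g (t - w, w)) (t - w, w) := (hg.differentiable (by simp) _).hasFDerivAt
  have h2 := HasFDerivAt.comp_hasDerivAt (f := fun x : ℝ => (t - x, x)) w h1 (((hasDerivAt_id w).const_sub t).prodMk (hasDerivAt_id w))
  have h3 : ((-1, 1) : ℝ × ℝ) = (0, 1) - (1, 0) := by ext <;> simp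
  rw [h3, map_sub] at h2
  exact h2

theorem cePy_shear {g : ℝ × ℝ → V} (hg : ContDiff ℝ ∞ g) (t₀ : ℝ) :
    cePy (fun p : ℝ × ℝ => g (t₀ + p.1 - p.2, p.2)) = fun p => ceD g (t₀ + p.1 - p.2, p.2) := by
  have hG : ContDiff ℝ ∞ (fun p : ℝ × ℝ => g (t₀ + p.1 - p.2, p.2)) := by fun_prop
  funext ⟨u, w⟩
  exact (cePy_hasDerivAt hG u w).unique (ceD_hasDerivAt hg (t₀ + u) w)

theorem cePu_line {g : ℝ × ℝ → V} (hg : ContDiff ℝ ∞ g) {h : ℝ → V} {t₀ : ℝ}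
    (hl : ∀ᶠ t in 𝓝 t₀, g (t, 0) = h t) : ∀ᶠ t in 𝓝 t₀, cePu g (t, 0) = deriv h t := by
  filter_upwards [EventuallyEq.deriv (f := h) (f₁ := fun t => g (t, 0)) hl] with t ht
  rw [← ht, (cePu_hasDerivAt hg t 0).deriv]

theorem ceD_two {f : ℝ × ℝ → V} (hf : ContDiff ℝ ∞ f) {t₀ : ℝ}
    (h0 : ∀ᶠ t in 𝓝 t₀, ceD f (t, 0) = 0) :
    ceD (ceD f) (t₀, 0) = - (cePu (cePy f) (t₀, 0) - cePy (cePy f) (t₀, 0)) := by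
  have h1 := (cePu_line (ceD_smooth hf) h0).self_of_nhds
  have h2 : cePy (ceD f) = fun p => cePy (cePy f) p - cePu (cePy f) p := by
    rw [← cePyPu hf]
    exact cePy_sub (cePy_smooth hf) (cePu_smooth hf)
  show cePy (ceD f) _ - cePu (ceD f) _ = _
  rw [h1, h2]
  simp

theorem ceD_three {f : ℝ × ℝ → V} (hf : ContDiff ℝ ∞ f) {t₀ : ℝ}
    (h0 : ∀ᶠ t in 𝓝 t₀, ceD f (t, 0) = 0) :
    ceD (ceD (ceD f)) (t₀, 0) = ceD (cePy (cePy f)) (t₀, 0) +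
      (2:ℝ) • cePu (fun p => cePu (cePy f) p - cePy (cePy f) p) (t₀, 0) := by
  have hy := cePy_smooth hf
  have hu := cePu_smooth hf
  have hyy := cePy_smooth hy
  have huy := cePu_smooth hy
  have huu := cePu_smooth hu
  have hD : ceD (ceD f) = fun p => (cePy (cePy f) p - cePu (cePy f) p) - (cePu (cePy f) p - cePu (cePu f) p) := by
    funext p
    show cePy (fun p => cePy f p - cePu f p) p - cePu (fun p => cePy f p - cePu f p) p = _
    rw [cePy_sub hy hu, cePu_sub hy hu, cePyPu hf]
  have h1 := cePu_line (ceD_smooth hf) h0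
  have h2 := (cePu_line (cePu_smooth (ceD_smooth hf)) h1).self_of_nhds
  have h3 : deriv (deriv fun _ : ℝ => (0:V)) t₀ = 0 := by simp
  rw [h3] at h2
  have h4 : cePu (cePu (ceD f)) = fun p => cePu (cePu (cePy f)) p - cePu (cePu (cePu f)) p := by
    have : cePu (ceD f) = fun p => cePu (cePy f) p - cePu (cePu f) p := cePu_sub hy hu
    rw [this, cePu_sub huy huu]
  rw [h4] at h2
  rw [hD, cePu_sub huy hyy]
  show cePy _ _ - cePu _ _ = cePy _ _ - cePu _ _ + _
  rw [cePy_sub (hyy.sub huy) (huy.sub huu), cePu_sub (hyy.sub huy) (huy.sub huu), cePy_sub hyy huy,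
    cePy_sub huy huu, cePu_sub hyy huy, cePu_sub huy huu, cePyPu hy, cePyPu hu, cePyPu hf]
  simp only at h2 ⊢
  rw [sub_eq_zero] at h2
  rw [h2]
  module
end

theorem ce_geod {m : ℕ} {Γ : (Fin m → ℝ) → Fin m → Fin m → Fin m → ℝ}
    {Ω : Set (Fin m → ℝ)} (hΩ : IsOpen Ω)
    (hΓ : ∀ l μ ν, ContDiffOn ℝ ∞ (fun x => Γ x l μ ν) Ω)
    (hTF : ∀ x l μ ν, Γ x l μ ν = Γ x l ν μ) {f : ℝ × ℝ → Fin m → ℝ} (hf : ContDiff ℝ ∞ f) {t₀ : ℝ}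
    (hΩ0 : f (t₀, 0) ∈ Ω) (h0 : ceD f (t₀, 0) = 0)
    (hgeo : ∀ᶠ p in 𝓝 (t₀, (0:ℝ)), ∀ l, cePy (cePy f) p l +
      ∑ μ, ∑ ν, Γ (f p) l μ ν * cePy f p μ * cePy f p ν = 0) (l : Fin m) :
    ceD (cePy (cePy f)) (t₀, 0) l = 2 * ∑ μ, ∑ ν, Γ (f (t₀, 0)) l μ ν * cePy f (t₀, 0) μ *
      (cePu (cePy f) (t₀, 0) - cePy (cePy f) (t₀, 0)) ν := by
  have hy := cePy_smooth hf
  have hyy := cePy_smooth hy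
  set K := cePu (cePy f) (t₀, 0) - cePy (cePy f) (t₀, 0) with hK
  have hDy : ceD (cePy f) (t₀, 0) = - K := by simp [ceD, hK]
  have d1 := ceD_hasDerivAt hf t₀ 0
  have d2 := ceD_hasDerivAt hy t₀ 0
  have d3 := ceD_hasDerivAt hyy t₀ 0
  simp only [sub_zero] at d1 d2 d3
  rw [h0] at d1
  rw [hDy] at d2
  have d2' := hasDerivAt_pi.1 d2
  have d3' := hasDerivAt_pi.1 d3 l
  have dΓ : ∀ μ ν, HasDerivAt (fun w => Γ (f (t₀ - w, w)) l μ ν) 0 0 := by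
    intro μ ν
    have h1 : DifferentiableAt ℝ (fun x => Γ x l μ ν) (f (t₀, 0)) :=
      ((hΓ l μ ν).contDiffAt (hΩ.mem_nhds hΩ0)).differentiableAt (by simp)
    have h2 : HasFDerivAt (fun x => Γ x l μ ν) (fderiv ℝ (fun x => Γ x l μ ν) (f (t₀, 0))) (f (t₀ - 0, 0)) := by
      rw [sub_zero]; exact h1.hasFDerivAt
    have := HasFDerivAt.comp_hasDerivAt (f := fun w : ℝ => f (t₀ - w, w)) 0 h2 d1
    rw [map_zero] at this
    exact this
  have dS : HasDerivAt (fun w => - ∑ μ, ∑ ν, Γ (f (t₀ - w, w)) l μ ν * cePy f (t₀ - w, w) μ * cePy f (t₀ - w, w) ν)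
      (- ∑ μ, ∑ ν, ((0 * cePy f (t₀, 0) μ + Γ (f (t₀, 0)) l μ ν * (-K) μ) * cePy f (t₀, 0) ν +
        Γ (f (t₀, 0)) l μ ν * cePy f (t₀, 0) μ * (-K) ν)) 0 := by
    refine (HasDerivAt.fun_sum fun μ _ => HasDerivAt.fun_sum fun ν _ => ?_).neg
    have h3 := ((dΓ μ ν).fun_mul (d2' μ)).fun_mul (d2' ν)
    simp only [sub_zero] at h3
    exact h3
  have hev : (fun w => cePy (cePy f) (t₀ - w, w) l) =ᶠ[𝓝 0]
      (fun w => - ∑ μ, ∑ ν, Γ (f (t₀ - w, w)) l μ ν * cePy f (t₀ - w, w) μ * cePy f (t₀ - w, w) ν) := by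
    have hc : Tendsto (fun w : ℝ => (t₀ - w, w)) (𝓝 0) (𝓝 (t₀, 0)) := by
      have : Continuous (fun w : ℝ => (t₀ - w, w)) := by fun_prop
      simpa using this.tendsto 0
    filter_upwards [hc.eventually hgeo] with w hw
    exact eq_neg_of_add_eq_zero_left (hw l)
  have hu := d3'.unique (dS.congr_of_eventuallyEq hev)
  rw [hu]
  have hsw : ∑ μ, ∑ ν, Γ (f (t₀, 0)) l μ ν * K μ * cePy f (t₀, 0) ν =
      ∑ μ, ∑ ν, Γ (f (t₀, 0)) l μ ν * cePy f (t₀, 0) μ * K ν := by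
    rw [Finset.sum_comm]
    refine Finset.sum_congr rfl fun μ _ => Finset.sum_congr rfl fun ν _ => ?_
    rw [hTF _ l ν μ]; ring
  have : ∀ μ ν, ((0 * cePy f (t₀, 0) μ + Γ (f (t₀, 0)) l μ ν * (-K) μ) * cePy f (t₀, 0) ν +
        Γ (f (t₀, 0)) l μ ν * cePy f (t₀, 0) μ * (-K) ν) =
      - (Γ (f (t₀, 0)) l μ ν * K μ * cePy f (t₀, 0) ν) - Γ (f (t₀, 0)) l μ ν * cePy f (t₀, 0) μ * K ν := by
    intro μ ν
    simp only [Pi.neg_apply]; ring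
  simp only [this, Finset.sum_sub_distrib, Finset.sum_neg_distrib, hsw]
  ring

theorem ce_main {m : ℕ} (hm : 3 ≤ m)
    (Γ : (Fin m → ℝ) → Fin m → Fin m → Fin m → ℝ)
    (Ω : Set (Fin m → ℝ)) (hΩ : IsOpen Ω)
    (hΓ : ∀ l μ ν, ContDiffOn ℝ ∞ (fun x => Γ x l μ ν) Ω)
    (hTF : ∀ x l μ ν, Γ x l μ ν = Γ x l ν μ)
    (W : Set ((Fin m → ℝ) × (Fin m → ℝ) × ℝ))
    (φ : (Fin m → ℝ) × (Fin m → ℝ) × ℝ → Fin m → ℝ)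
    (hφ : IsGeodesicFlow Γ Ω W φ)
    (I : Set ℝ) (hI : IsOpen I)
    (γ : ℝ → Fin m → ℝ) (hγ : ContDiffOn ℝ ∞ γ I) (hγΩ : ∀ t ∈ I, γ t ∈ Ω)
    (t₀ : ℝ) (ht₀ : t₀ ∈ I)
    (hind : LinearIndependent ℝ
      ![covDeriv Γ γ 0 t₀, covDeriv Γ γ 1 t₀, covDeriv Γ γ 2 t₀]) :
    GermDiffeomorphic
      (fun p : ℝ × ℝ => φ (γ p.1, deriv γ p.1, p.2)) (t₀, (0 : ℝ))
      (fun p : ℝ × ℝ => fun j : Fin m =>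
        if j.val = 0 then p.1
        else if j.val = 1 then p.2 ^ 2
        else if j.val = 2 then p.2 ^ 3
        else 0)
      ((0 : ℝ), (0 : ℝ)) := by
  set F : ℝ × ℝ → Fin m → ℝ := fun p => φ (γ p.1, deriv γ p.1, p.2) with hF
  have hγ' : ContDiffOn ℝ ∞ (deriv γ) I := by
    exact hγ.deriv_of_isOpen hI (by simp)
  -- the smooth domain
  let J : Set (ℝ × ℝ) := Prod.fst ⁻¹' I
  have hJ : IsOpen J := hI.preimage continuous_fst
  let ψ : ℝ × ℝ → (Fin m → ℝ) × (Fin m → ℝ) × ℝ := fun p => (γ p.1, deriv γ p.1, p.2)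
  have hψ : ContDiffOn ℝ ∞ ψ J := by
    have hfst : MapsTo (Prod.fst : ℝ × ℝ → ℝ) J I := fun p hp => hp
    exact (hγ.comp contDiff_fst.contDiffOn hfst).prodMk
      ((hγ'.comp contDiff_fst.contDiffOn hfst).prodMk contDiff_snd.contDiffOn)
  let O : Set (ℝ × ℝ) := J ∩ ψ ⁻¹' W
  have hO : IsOpen O := hψ.continuousOn.isOpen_inter_preimage hJ hφ.isOpen_W
  have hO0 : ∀ t ∈ I, (t, (0:ℝ)) ∈ O := fun t ht => ⟨ht, hφ.mem_zero _ (hγΩ t ht) _⟩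
  have hFO : ContDiffOn ℝ ∞ F O :=
    hφ.smooth.comp (hψ.mono inter_subset_left) (fun p hp => hp.2)
  obtain ⟨r, hr, hrO⟩ := Metric.isOpen_iff.1 hO _ (hO0 t₀ ht₀)
  let χ : ContDiffBump ((t₀, 0) : ℝ × ℝ) := ⟨r/4, r/2, by positivity, by linarith⟩
  let f : ℝ × ℝ → Fin m → ℝ := fun p => χ p • F p
  have hf : ContDiff ℝ ∞ f := by
    rw [contDiff_iff_contDiffAt]
    intro p
    by_cases hp : p ∈ O
    · exact χ.contDiff.contDiffAt.smul (hFO.contDiffAt (hO.mem_nhds hp))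
    · have hpt : p ∉ tsupport χ := by
        rw [χ.tsupport_eq]
        intro hmem
        exact hp (hrO (Metric.closedBall_subset_ball (by show r/2 < r; linarith) hmem))
      have hz : f =ᶠ[𝓝 p] fun _ => 0 := by
        filter_upwards [(notMem_tsupport_iff_eventuallyEq.1 hpt)] with q hq
        simp [f, hq]
      exact contDiffAt_const.congr_of_eventuallyEq hz
  have hfF : ∀ᶠ p in 𝓝 (t₀, (0:ℝ)), f p = F p := by
    filter_upwards [χ.eventuallyEq_one] with p hp
    simp [f, hp]
  have hfz : ∀ t s, r ≤ |t - t₀ + s| → f (t, s) = 0 := by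
    intro t s hts
    have : χ (t, s) = 0 := by
      refine χ.zero_of_le_dist ?_
      show r/2 ≤ _
      rw [Prod.dist_eq, Real.dist_eq, Real.dist_eq]
      by_contra hlt
      have h1 := (max_lt_iff.1 (not_le.1 hlt))
      have := abs_add_le (t - t₀) s
      simp only [sub_zero] at h1
      linarith
    simp [f, this]
  -- values on the line s = 0
  have hline : Tendsto (fun t : ℝ => (t, (0:ℝ))) (𝓝 t₀) (𝓝 (t₀, 0)) := by
    have : Continuous (fun t : ℝ => (t, (0:ℝ))) := by fun_prop
    exact this.tendsto t₀
  have hev2 := hfF.eventually_nhds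
  have hIev : ∀ᶠ t in 𝓝 t₀, t ∈ I := hI.mem_nhds ht₀
  have hslice : ∀ t s, (∀ᶠ p in 𝓝 (t, s), f p = F p) → (fun s => f (t, s)) =ᶠ[𝓝 s] fun s => F (t, s) := by
    intro t s h
    have : Continuous (fun s : ℝ => (t, s)) := by fun_prop
    exact (this.tendsto s).eventually h
  have hl0 : ∀ᶠ t in 𝓝 t₀, f (t, 0) = γ t := by
    filter_upwards [hline.eventually hfF, hIev] with t ht htI
    rw [ht]
    exact hφ.init_pos _ (hγΩ t htI) _
  have hly : ∀ᶠ t in 𝓝 t₀, cePy f (t, 0) = deriv γ t := by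
    filter_upwards [hline.eventually hev2, hIev] with t ht htI
    rw [← (cePy_hasDerivAt hf t 0).deriv, (hslice t 0 ht).deriv_eq]
    exact hφ.init_vel _ (hγΩ t htI) (deriv γ t)
  have hlu : ∀ᶠ t in 𝓝 t₀, cePu f (t, 0) = deriv γ t := cePu_line hf hl0
  have hD0 : ∀ᶠ t in 𝓝 t₀, ceD f (t, 0) = 0 := by
    filter_upwards [hly, hlu] with t h1 h2
    simp [ceD, h1, h2]
  have hOev : ∀ᶠ p in 𝓝 (t₀, (0:ℝ)), p ∈ O := hO.mem_nhds (hO0 t₀ ht₀)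
  have hy := cePy_smooth hf
  have hyy := cePy_smooth hy
  have hgeo : ∀ᶠ p in 𝓝 (t₀, (0:ℝ)), ∀ l, cePy (cePy f) p l +
      ∑ μ, ∑ ν, Γ (f p) l μ ν * cePy f p μ * cePy f p ν = 0 := by
    filter_upwards [hev2, hOev] with p hp hpO l
    obtain ⟨t, s⟩ := p
    have hg := hφ.geodesic _ hpO.2 l
    have hsl := hslice t s hp
    have hc : ∀ k, (fun s => F (t, s) k) =ᶠ[𝓝 s] fun s => f (t, s) k := fun k => by
      filter_upwards [hsl] with s' hs'
      rw [hs']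
    have hd : ∀ k, deriv (fun s => f (t, s) k) = fun s => cePy f (t, s) k := fun k => by
      funext s
      exact (hasDerivAt_pi.1 (cePy_hasDerivAt hf t s) k).deriv
    have e1 : ∀ k, deriv (fun s => F (t, s) k) s = cePy f (t, s) k := fun k => by
      rw [(hc k).deriv_eq, hd]
    have e2 : deriv (deriv (fun s => F (t, s) l)) s = cePy (cePy f) (t, s) l := by
      rw [(hc l).deriv.deriv_eq, hd]
      exact (hasDerivAt_pi.1 (cePy_hasDerivAt hy t s) l).deriv
    have e3 : φ (ψ (t, s)) = f (t, s) := hp.self_of_nhds.symm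
    rw [← e2]
    simp only [← e1]
    rw [← e3]
    exact hg
  -- covariant derivatives
  have hK1 : ∀ᶠ t in 𝓝 t₀, covDeriv Γ γ 1 t = cePu (cePy f) (t, 0) - cePy (cePy f) (t, 0) := by
    filter_upwards [hl0, hly, hly.eventually_nhds, hline.eventually hgeo] with t h0 h1 h2 hg
    funext l
    have e1 : deriv (fun u => deriv γ u l) t = cePu (cePy f) (t, 0) l := by
      have : (fun u => deriv γ u l) =ᶠ[𝓝 t] fun u => cePy f (u, 0) l := by
        filter_upwards [h2] with u hu
        rw [hu]
      rw [this.deriv_eq]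
      exact (hasDerivAt_pi.1 (cePu_hasDerivAt hy t 0) l).deriv
    have hgl := hg l
    simp only [covDeriv, Pi.sub_apply]
    rw [e1, ← h1, ← h0]
    linarith
  set K : ℝ × ℝ → Fin m → ℝ := fun p => cePu (cePy f) p - cePy (cePy f) p with hKdef
  have hKs : ContDiff ℝ ∞ K := (cePu_smooth hy).sub hyy
  have hf0 := hl0.self_of_nhds
  have hy0 := hly.self_of_nhds
  have hK10 : covDeriv Γ γ 1 t₀ = K (t₀, 0) := hK1.self_of_nhds
  have hgd := ce_geod hΩ hΓ hTF hf (by rw [hf0]; exact hγΩ t₀ ht₀) hD0.self_of_nhds hgeo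
  have hD3 : ceD (ceD (ceD f)) (t₀, 0) = (2:ℝ) • covDeriv Γ γ 2 t₀ := by
    rw [ceD_three hf hD0]
    funext l
    have e1 : deriv (fun u => covDeriv Γ γ 1 u l) t₀ = cePu K (t₀, 0) l := by
      have : (fun u => covDeriv Γ γ 1 u l) =ᶠ[𝓝 t₀] fun u => K (u, 0) l := by
        filter_upwards [hK1] with u hu
        rw [hu]
      rw [this.deriv_eq]
      exact (hasDerivAt_pi.1 (cePu_hasDerivAt hKs t₀ 0) l).deriv
    have e2 : covDeriv Γ γ 2 t₀ l = deriv (fun u => covDeriv Γ γ 1 u l) t₀ +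
        ∑ μ, ∑ ν, Γ (γ t₀) l μ ν * deriv γ t₀ μ * covDeriv Γ γ 1 t₀ ν := rfl
    simp only [Pi.add_apply, Pi.smul_apply, smul_eq_mul]
    rw [e2, e1, hK10, hgd l, hf0, hy0]
    ring
  have hD2 : ceD (ceD f) (t₀, 0) = - covDeriv Γ γ 1 t₀ := by
    rw [ceD_two hf hD0, hK10]
  -- normal form
  let G : ℝ × ℝ → Fin m → ℝ := fun p => f (t₀ + p.1 - p.2, p.2)
  have hG : ContDiff ℝ ∞ G := by fun_prop
  have hGy : cePy G = fun p => ceD f (t₀ + p.1 - p.2, p.2) := cePy_shear hf t₀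
  have hGyy : cePy (cePy G) = fun p => ceD (ceD f) (t₀ + p.1 - p.2, p.2) := by
    rw [hGy]; exact cePy_shear (ceD_smooth hf) t₀
  have hGyyy : cePy (cePy (cePy G)) = fun p => ceD (ceD (ceD f)) (t₀ + p.1 - p.2, p.2) := by
    rw [hGyy]; exact cePy_shear (ceD_smooth (ceD_smooth hf)) t₀
  have hshift : Tendsto (fun u : ℝ => t₀ + u) (𝓝 0) (𝓝 t₀) := by
    have : Continuous (fun u : ℝ => t₀ + u) := by fun_prop
    simpa using this.tendsto 0
  obtain ⟨a, c, ha, hc, hform, hau, hay, hac⟩ := ce_form (R := r) hG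
    (fun u w hu => hfz _ _ (by convert hu using 2; ring))
    (by
      rw [hGy]
      filter_upwards [hshift.eventually hD0] with u hu
      simpa using hu)
  have hau' : cePu a (0, 0) = covDeriv Γ γ 0 t₀ := by
    rw [hau]
    have h1 : ∀ᶠ u in 𝓝 (0:ℝ), G (u, 0) = γ (t₀ + u) := by
      filter_upwards [hshift.eventually hl0] with u hu
      simpa [G] using hu
    rw [(cePu_line hG h1).self_of_nhds, deriv_comp_const_add, add_zero]
    rfl
  rw [hGyy] at hay
  rw [hGyyy] at hac
  simp only [add_zero, sub_zero] at hay hac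
  rw [hD2] at hay
  rw [hD3] at hac
  have hay' : cePy a (0, 0) = (-1/2 : ℝ) • covDeriv Γ γ 1 t₀ := by
    have : cePy a (0, 0) = (1/2 : ℝ) • ((2:ℝ) • cePy a (0, 0)) := by module
    rw [this, hay]; module
  have hac' : c (0, 0) = (1/3 : ℝ) • covDeriv Γ γ 2 t₀ := by
    have : c (0, 0) = (1/6 : ℝ) • ((6:ℝ) • c (0, 0)) := by module
    rw [this, hac]; module
  refine ce_germ_of_form hm ha hc ?_ ?_
  · have h1 := hind.units_smul ![1, Units.mk0 (-1/2 : ℝ) (by norm_num), Units.mk0 (1/3 : ℝ) (by norm_num)]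
    convert h1 using 1
    funext i
    fin_cases i
    · simp [hau']
    · simp [hay', Units.smul_def]
    · simp [hac', Units.smul_def]
  · have hcont : Tendsto (fun p : ℝ × ℝ => p.1 - t₀ + p.2) (𝓝 (t₀, 0)) (𝓝 0) := by
      have : Continuous (fun p : ℝ × ℝ => p.1 - t₀ + p.2) := by fun_prop
      simpa using this.tendsto (t₀, 0)
    filter_upwards [hcont.eventually hform, hfF] with p hp hpF
    rw [← hp p.2, ← hpF]
    show f p = f (t₀ + (p.1 - t₀ + p.2) - p.2, p.2)
    congr 1
    refine Prod.ext ?_ rfl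
    show p.1 = t₀ + (p.1 - t₀ + p.2) - p.2
    ring

end CuspidalHelpers

/-- For `m ≥ 4`, a torsion-free connection on an open set `Ω ⊆ ℝ^m`, a
geodesic flow `φ`, and a `C^∞` curve `γ : I → Ω`, if `∇γ(t₀), ∇²γ(t₀), ∇³γ(t₀)` are
linearly independent then the germ at `(t₀, 0)` of the `∇`-tangent surface
`f(t,s) = φ(γ(t), γ'(t), s)` is diffeomorphic to the embedded cuspidal edge
`(u,w) ↦ (u, w², w³, 0, …, 0) : ℝ² → ℝ^m`. -/
theorem tangent_surface_embedded_cuspidal_edge (m : ℕ) (hm : 4 ≤ m)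
    (Γ : (Fin m → ℝ) → Fin m → Fin m → Fin m → ℝ)
    (Ω : Set (Fin m → ℝ)) (hΩ : IsOpen Ω)
    (hΓ : ∀ l μ ν, ContDiffOn ℝ (⊤ : ℕ∞) (fun x => Γ x l μ ν) Ω)
    (hTF : ∀ x l μ ν, Γ x l μ ν = Γ x l ν μ)
    (W : Set ((Fin m → ℝ) × (Fin m → ℝ) × ℝ))
    (φ : (Fin m → ℝ) × (Fin m → ℝ) × ℝ → Fin m → ℝ)
    (hφ : IsGeodesicFlow Γ Ω W φ)
    (I : Set ℝ) (hI : IsOpen I) (hI' : I.OrdConnected)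
    (γ : ℝ → Fin m → ℝ) (hγ : ContDiffOn ℝ (⊤ : ℕ∞) γ I) (hγΩ : ∀ t ∈ I, γ t ∈ Ω)
    (t₀ : ℝ) (ht₀ : t₀ ∈ I)
    (hind : LinearIndependent ℝ
      ![covDeriv Γ γ 0 t₀, covDeriv Γ γ 1 t₀, covDeriv Γ γ 2 t₀]) :
    GermDiffeomorphic
      (fun p : ℝ × ℝ => φ (γ p.1, deriv γ p.1, p.2)) (t₀, (0 : ℝ))
      (fun p : ℝ × ℝ => fun j : Fin m =>
        if j.val = 0 then p.1
        else if j.val = 1 then p.2 ^ 2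
        else if j.val = 2 then p.2 ^ 3
        else 0)
      ((0 : ℝ), (0 : ℝ)) := by
  exact ce_main (by omega) Γ Ω hΩ hΓ hTF W φ hφ I hI γ hγ hγΩ t₀ ht₀ hind
end
end

section
/- Let m ≥ 3 and let γ : I → ℝ^m be a C^∞ curve on an open interval I. If γ'(t₀), γ''(t₀), γ'''(t₀) are linearly independent, then the tangent surface f(t,s) = γ(t) + s γ'(t) is, as a germ at (t₀, 0) ∈ I × ℝ, diffeomorphic to the cuspidal edge (u,w) ↦ (u, w², w³, 0, …, 0) : ℝ² → ℝ^m. -/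
open Set

noncomputable section

open Filter Topology
open scoped ContDiff

theorem exists_cos_kernel0 : ∃ C : ℝ → ℝ, ContDiff ℝ ∞ C ∧ ∀ w, C (w ^ 2) = Real.cos w := by
  let c : ℕ → ℝ := fun n => (-1) ^ n / ((2 * n).factorial : ℝ)
  have hr : (FormalMultilinearSeries.ofScalars ℝ c).radius = ⊤ := by
    apply FormalMultilinearSeries.ofScalars_radius_eq_top_of_tendsto
    · refine Eventually.of_forall fun n => ?_
      simp only [c]
      positivity
    · have h1 : ∀ n : ℕ, ‖c n.succ‖ / ‖c n‖ ≤ 1 / ((n : ℝ) + 1) := by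
        intro n
        have hf : ((2 * n.succ).factorial : ℝ) = (2 * n + 2) * ((2 * n + 1) * (2 * n).factorial) := by
          rw [show 2 * n.succ = 2 * n + 1 + 1 by omega, Nat.factorial_succ, Nat.factorial_succ]
          push_cast; ring
        have hp : (0 : ℝ) < (2 * n).factorial := by positivity
        simp only [c, norm_div, norm_pow, norm_neg, norm_one, one_pow, hf]
        rw [Real.norm_of_nonneg (by positivity), Real.norm_of_nonneg (by positivity)]
        rw [div_div_div_cancel_left' _ _ one_ne_zero]
        rw [div_le_div_iff₀ (by positivity) (by positivity)]
        have : (0:ℝ) ≤ n := by positivity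
        nlinarith [mul_nonneg this hp.le, mul_nonneg (mul_nonneg this this) hp.le]
      exact squeeze_zero (fun n => by positivity) h1 tendsto_one_div_add_atTop_nhds_zero_nat
  have hs := (FormalMultilinearSeries.ofScalars ℝ c).hasFPowerSeriesOnBall (by rw [hr]; simp)
  refine ⟨(FormalMultilinearSeries.ofScalars ℝ c).sum, ?_, fun w => ?_⟩
  · have := hs.analyticOnNhd
    rw [hr] at this
    rw [← contDiffOn_univ]
    simpa using (this.contDiffOn (n := ∞) (by simp [uniqueDiffOn_univ]))
  · have h2 := hs.hasSum (y := w ^ 2) (by rw [hr]; simp)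
    have h3 := Real.hasSum_cos w
    rw [zero_add] at h2
    refine h2.unique ?_
    convert! h3 using 2 with n
    simp [c, ← pow_mul]
    ring

theorem cos_kernel_deriv {C : ℝ → ℝ} (hC : ContDiff ℝ ∞ C) (h : ∀ w, C (w ^ 2) = Real.cos w) (w : ℝ) :
    2 * w * deriv C (w ^ 2) = - Real.sin w := by
  have h1 : HasDerivAt (fun w => C (w ^ 2)) (deriv C (w ^ 2) * (2 * w)) w := by
    have := (hC.differentiable (by simp)) (w ^ 2) |>.hasDerivAt
    refine this.comp w (h₂ := C) (h := fun w => w ^ 2) ?_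
    simpa using hasDerivAt_pow 2 w
  have h2 : HasDerivAt (fun w => C (w ^ 2)) (- Real.sin w) w := by
    simp_rw [h]; exact Real.hasDerivAt_cos w
  rw [← h1.unique h2]; ring

theorem cos_kernel_ode {C : ℝ → ℝ} (hC : ContDiff ℝ ∞ C) (h : ∀ w, C (w ^ 2) = Real.cos w) (n : ℕ) :
    ∀ y : ℝ, 0 < y → 4 * y * iteratedDeriv (n + 2) C y + (4 * n + 2) * iteratedDeriv (n + 1) C y
      + iteratedDeriv n C y = 0 := by
  have hd : ∀ n y, HasDerivAt (iteratedDeriv n C) (iteratedDeriv (n + 1) C y) y := by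
    intro n y
    rw [iteratedDeriv_succ]
    exact ((hC.differentiable_iteratedDeriv n (by exact_mod_cast WithTop.coe_lt_top _)) y).hasDerivAt
  induction n with
  | zero =>
    intro y hy
    obtain ⟨w, rfl⟩ : ∃ w, y = w ^ 2 := ⟨√y, (Real.sq_sqrt hy.le).symm⟩
    have h1 : HasDerivAt (fun w => 2 * w * deriv C (w ^ 2))
        (2 * deriv C (w ^ 2) + 2 * w * (iteratedDeriv 2 C (w ^ 2) * (2 * w))) w := by
      have h3 : HasDerivAt (fun w => deriv C (w ^ 2)) (iteratedDeriv 2 C (w ^ 2) * (2 * w)) w := by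
        have := hd 1 (w ^ 2)
        rw [iteratedDeriv_one] at this
        refine this.comp w (h₂ := deriv C) (h := fun w => w ^ 2) ?_
        simpa using hasDerivAt_pow 2 w
      have h4 : HasDerivAt (fun w : ℝ => 2 * w) 2 w := by
        simpa using (hasDerivAt_id w).const_mul 2
      exact h4.mul h3
    have h2 : HasDerivAt (fun w => 2 * w * deriv C (w ^ 2)) (- Real.cos w) w := by
      simp_rw [cos_kernel_deriv hC h]; exact (Real.hasDerivAt_sin w).neg
    have := h1.unique h2
    rw [← h w] at this
    simp only [zero_add, iteratedDeriv_one, iteratedDeriv_zero, Nat.cast_zero]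
    linarith
  | succ n ih =>
    intro y hy
    have h1 : HasDerivAt (fun y => 4 * y * iteratedDeriv (n + 2) C y
        + (4 * n + 2) * iteratedDeriv (n + 1) C y + iteratedDeriv n C y)
        (4 * iteratedDeriv (n + 2) C y + 4 * y * iteratedDeriv (n + 3) C y
          + (4 * n + 2) * iteratedDeriv (n + 2) C y + iteratedDeriv (n + 1) C y) y := by
      have h4 : HasDerivAt (fun w : ℝ => 4 * w) 4 y := by
        simpa using (hasDerivAt_id y).const_mul 4
      exact ((h4.mul (hd (n + 2) y)).add ((hd (n + 1) y).const_mul _)).add (hd n y)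
    have h2 : HasDerivAt (fun y => 4 * y * iteratedDeriv (n + 2) C y
        + (4 * n + 2) * iteratedDeriv (n + 1) C y + iteratedDeriv n C y) 0 y := by
      refine (hasDerivAt_const y (0 : ℝ)).congr_of_eventuallyEq ?_
      filter_upwards [lt_mem_nhds hy] with z hz using ih z hz
    have := h1.unique h2
    push_cast
    rw [show n + 1 + 2 = n + 3 by ring, show n + 1 + 1 = n + 2 by ring]
    linarith

theorem exists_cos_kernel : ∃ C : ℝ → ℝ, ContDiff ℝ ∞ C ∧ (∀ w, C (w ^ 2) = Real.cos w) ∧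
    ∀ n, ∃ M, ∀ y, |iteratedDeriv n C y| ≤ M := by
  obtain ⟨C0, hC0, h0⟩ := exists_cos_kernel0
  let C : ℝ → ℝ := fun y => C0 y * Real.smoothTransition (y + 1)
  have hC : ContDiff ℝ ∞ C :=
    hC0.mul (Real.smoothTransition.contDiff.comp (contDiff_id.add contDiff_const))
  have h : ∀ w, C (w ^ 2) = Real.cos w := by
    intro w
    simp only [C, h0]
    rw [Real.smoothTransition.one_of_one_le (by nlinarith [sq_nonneg w]), mul_one]
  refine ⟨C, hC, h, ?_⟩
  have hcont : ∀ n, Continuous (iteratedDeriv n C) := fun n =>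
    hC.continuous_iteratedDeriv n (by exact_mod_cast le_top)
  have hneg : ∀ n y, y < -1 → iteratedDeriv n C y = 0 := by
    intro n y hy
    have : C =ᶠ[𝓝 y] fun _ => 0 := by
      filter_upwards [gt_mem_nhds hy] with z hz
      simp only [C]
      rw [Real.smoothTransition.zero_of_nonpos (by linarith), mul_zero]
    rw [this.iteratedDeriv_eq]
    simp
  have hmid : ∀ n, ∃ M, ∀ y ∈ Icc (-1 : ℝ) 1, |iteratedDeriv n C y| ≤ M := fun n =>
    isCompact_Icc.exists_bound_of_continuousOn (hcont n).continuousOn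
  have hpos : ∀ n, (∃ M, ∀ y, 1 ≤ y → |iteratedDeriv n C y| ≤ M) ∧
      (∃ M, ∀ y, 1 ≤ y → |iteratedDeriv (n + 1) C y| ≤ M) := by
    intro n
    induction n with
    | zero =>
      refine ⟨⟨1, fun y hy => ?_⟩, ⟨1, fun y hy => ?_⟩⟩
      · obtain ⟨w, rfl⟩ : ∃ w, y = w ^ 2 := ⟨√y, (Real.sq_sqrt (by linarith)).symm⟩
        simpa [h] using Real.abs_cos_le_one w
      · have hw : y = √y ^ 2 := (Real.sq_sqrt (by linarith)).symm
        have h1 : 1 ≤ √y := Real.one_le_sqrt.2 hy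
        have h2 := cos_kernel_deriv hC h (√y)
        rw [← hw] at h2
        have h3 : |2 * √y * deriv C y| ≤ 1 := by rw [h2, abs_neg]; exact Real.abs_sin_le_one _
        rw [abs_mul, abs_of_nonneg (by positivity)] at h3
        simp only [zero_add, iteratedDeriv_one]
        nlinarith [abs_nonneg (deriv C y)]
    | succ n ih =>
      refine ⟨ih.2, ?_⟩
      obtain ⟨⟨M, hM⟩, ⟨N, hN⟩⟩ := ih
      refine ⟨(4 * n + 2) * N + M, fun y hy => ?_⟩
      have e := cos_kernel_ode hC h n y (by linarith)
      have e2 : |4 * y * iteratedDeriv (n + 2) C y| ≤ (4 * n + 2) * N + M := by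
        rw [show 4 * y * iteratedDeriv (n + 2) C y =
          -((4 * n + 2) * iteratedDeriv (n + 1) C y + iteratedDeriv n C y) by linarith, abs_neg]
        refine (abs_add_le _ _).trans (add_le_add ?_ (hM y hy))
        rw [abs_mul, abs_of_nonneg (by positivity)]
        exact mul_le_mul_of_nonneg_left (hN y hy) (by positivity)
      rw [abs_mul, abs_of_nonneg (by linarith)] at e2
      rw [show n + 1 + 1 = n + 2 by ring]
      nlinarith [abs_nonneg (iteratedDeriv (n + 2) C y)]
  intro n
  obtain ⟨M, hM⟩ := hmid n
  obtain ⟨N, hN⟩ := (hpos n).1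
  refine ⟨max M N, fun y => ?_⟩
  rcases lt_or_ge y (-1) with hy | hy
  · rw [hneg n y hy, abs_zero]
    exact le_max_of_le_left ((abs_nonneg _).trans (hM 0 (by norm_num)))
  rcases le_or_gt y 1 with hy' | hy'
  · exact le_max_of_le_left (hM y ⟨hy, hy'⟩)
  · exact le_max_of_le_right (hN y hy'.le)

def GoodWeight (ψ : ℝ → ℂ) : Prop :=
  Continuous ψ ∧ ∀ k : ℕ, MeasureTheory.Integrable (fun ξ : ℝ => ‖ξ‖ ^ k * ‖ψ ξ‖)

theorem GoodWeight.mul_pow {ψ : ℝ → ℂ} (h : GoodWeight ψ) (c : ℂ) (j : ℕ) :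
    GoodWeight (fun ξ => ψ ξ * (c * (ξ : ℂ) ^ j)) := by
  refine ⟨h.1.mul (by fun_prop), fun k => ?_⟩
  have := (h.2 (k + j)).const_mul ‖c‖
  refine this.congr (Filter.Eventually.of_forall fun ξ => ?_)
  simp only [norm_mul, norm_pow, Complex.norm_real]
  ring

def kerInt (K : ℝ → ℝ) (ψ : ℝ → ℂ) (p : ℝ × ℝ) : ℂ :=
  ∫ ξ : ℝ, ψ ξ * Complex.exp (((2 * Real.pi * ξ * p.1 : ℝ) : ℂ) * Complex.I) *
    ((K ((2 * Real.pi * ξ) ^ 2 * p.2) : ℝ) : ℂ)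

theorem kerInt_aux_int {K : ℝ → ℝ} (hK : Continuous K) {M : ℝ} (hM : ∀ y, |K y| ≤ M)
    {ψ : ℝ → ℂ} (hψ : GoodWeight ψ) (p : ℝ × ℝ) :
    MeasureTheory.Integrable (fun ξ : ℝ => ψ ξ *
      Complex.exp (((2 * Real.pi * ξ * p.1 : ℝ) : ℂ) * Complex.I) *
    ((K ((2 * Real.pi * ξ) ^ 2 * p.2) : ℝ) : ℂ)) := by
  have hb := (hψ.2 0).const_mul M
  refine hb.mono' ?_ (Filter.Eventually.of_forall fun ξ => ?_)
  · have := hψ.1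
    refine Continuous.aestronglyMeasurable ?_
    fun_prop
  · rw [norm_mul, norm_mul, Complex.norm_exp_ofReal_mul_I, Complex.norm_real, Real.norm_eq_abs]
    rw [pow_zero, one_mul, mul_one, mul_comm]
    exact mul_le_mul_of_nonneg_right (hM _) (norm_nonneg _)

theorem kerInt_hasFDerivAt {K K' : ℝ → ℝ} (hK : ∀ y, HasDerivAt K (K' y) y) (hK'c : Continuous K')
    {M M' : ℝ} (hM : ∀ y, |K y| ≤ M) (hM' : ∀ y, |K' y| ≤ M')
    {ψ : ℝ → ℂ} (hψ : GoodWeight ψ) (p : ℝ × ℝ) :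
    HasFDerivAt (kerInt K ψ)
      ((ContinuousLinearMap.fst ℝ ℝ ℝ).smulRight
          (kerInt K (fun ξ => ψ ξ * ((2 * Real.pi * Complex.I) * (ξ : ℂ) ^ 1)) p) +
        (ContinuousLinearMap.snd ℝ ℝ ℝ).smulRight
          (kerInt K' (fun ξ => ψ ξ * ((2 * Real.pi) ^ 2 * (ξ : ℂ) ^ 2)) p)) p := by
  have hKc : Continuous K := continuous_iff_continuousAt.2 fun y => (hK y).continuousAt
  have hψ1 := hψ.mul_pow (2 * Real.pi * Complex.I) 1
  have hψ2 := hψ.mul_pow ((2 * Real.pi) ^ 2) 2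
  let a : ℝ × ℝ → ℝ → ℂ := fun q ξ => (ψ ξ * ((2 * Real.pi * Complex.I) * (ξ : ℂ) ^ 1)) *
      Complex.exp (((2 * Real.pi * ξ * q.1 : ℝ) : ℂ) * Complex.I) *
      ((K ((2 * Real.pi * ξ) ^ 2 * q.2) : ℝ) : ℂ)
  let b : ℝ × ℝ → ℝ → ℂ := fun q ξ => (ψ ξ * ((2 * Real.pi) ^ 2 * (ξ : ℂ) ^ 2)) *
      Complex.exp (((2 * Real.pi * ξ * q.1 : ℝ) : ℂ) * Complex.I) *
      ((K' ((2 * Real.pi * ξ) ^ 2 * q.2) : ℝ) : ℂ)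
  have ha : ∀ q, MeasureTheory.Integrable (a q) := fun q => kerInt_aux_int hKc hM hψ1 q
  have hb : ∀ q, MeasureTheory.Integrable (b q) := fun q => kerInt_aux_int hK'c hM' hψ2 q
  let L1 : ℂ →L[ℝ] (ℝ × ℝ →L[ℝ] ℂ) :=
    ContinuousLinearMap.smulRightL ℝ (ℝ × ℝ) ℂ (ContinuousLinearMap.fst ℝ ℝ ℝ)
  let L2 : ℂ →L[ℝ] (ℝ × ℝ →L[ℝ] ℂ) :=
    ContinuousLinearMap.smulRightL ℝ (ℝ × ℝ) ℂ (ContinuousLinearMap.snd ℝ ℝ ℝ)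
  have hIntEq : (∫ ξ, (L1 (a p ξ) + L2 (b p ξ))) =
      ((ContinuousLinearMap.fst ℝ ℝ ℝ).smulRight
          (kerInt K (fun ξ => ψ ξ * ((2 * Real.pi * Complex.I) * (ξ : ℂ) ^ 1)) p) +
        (ContinuousLinearMap.snd ℝ ℝ ℝ).smulRight
          (kerInt K' (fun ξ => ψ ξ * ((2 * Real.pi) ^ 2 * (ξ : ℂ) ^ 2)) p)) := by
    rw [MeasureTheory.integral_add (L1.integrable_comp (ha p)) (L2.integrable_comp (hb p)),
      L1.integral_comp_comm (ha p), L2.integral_comp_comm (hb p)]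
    rfl
  rw [← hIntEq]
  refine hasFDerivAt_integral_of_dominated_of_fderiv_le (𝕜 := ℝ) (s := univ)
    (F := fun q ξ => ψ ξ * Complex.exp (((2 * Real.pi * ξ * q.1 : ℝ) : ℂ) * Complex.I) *
      ((K ((2 * Real.pi * ξ) ^ 2 * q.2) : ℝ) : ℂ))
    (F' := fun q ξ => L1 (a q ξ) + L2 (b q ξ))
    (bound := fun ξ => ‖L1‖ * (M * ‖ψ ξ * ((2 * Real.pi * Complex.I) * (ξ : ℂ) ^ 1)‖) +
      ‖L2‖ * (M' * ‖ψ ξ * ((2 * Real.pi) ^ 2 * (ξ : ℂ) ^ 2)‖))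
    Filter.univ_mem ?_ ?_ ?_ ?_ ?_ ?_
  · exact Filter.Eventually.of_forall fun q =>
      (kerInt_aux_int hKc hM hψ q).aestronglyMeasurable
  · exact kerInt_aux_int hKc hM hψ p
  · exact ((L1.integrable_comp (ha p)).add (L2.integrable_comp (hb p))).aestronglyMeasurable
  · refine Filter.Eventually.of_forall fun ξ q _ => ?_
    refine (norm_add_le _ _).trans (add_le_add ?_ ?_)
    · refine (L1.le_opNorm _).trans (mul_le_mul_of_nonneg_left ?_ (norm_nonneg _))
      simp only [a]
      rw [norm_mul, norm_mul (ψ ξ * _), Complex.norm_exp_ofReal_mul_I, Complex.norm_real,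
        Real.norm_eq_abs, mul_one, mul_comm]
      exact mul_le_mul_of_nonneg_right (hM _) (norm_nonneg _)
    · refine (L2.le_opNorm _).trans (mul_le_mul_of_nonneg_left ?_ (norm_nonneg _))
      simp only [b]
      rw [norm_mul, norm_mul (ψ ξ * _), Complex.norm_exp_ofReal_mul_I, Complex.norm_real,
        Real.norm_eq_abs, mul_one, mul_comm]
      exact mul_le_mul_of_nonneg_right (hM' _) (norm_nonneg _)
  · have h1 := hψ1.2 0
    have h2 := hψ2.2 0
    simp only [pow_zero, one_mul] at h1 h2
    exact ((h1.const_mul M).const_mul _).add ((h2.const_mul M').const_mul _)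
  · refine Filter.Eventually.of_forall fun ξ q _ => ?_
    have e1 : HasFDerivAt (fun q : ℝ × ℝ => ((2 * Real.pi * ξ * q.1 : ℝ) : ℂ) * Complex.I)
        ((ContinuousLinearMap.fst ℝ ℝ ℝ).smulRight (2 * Real.pi * ξ * Complex.I)) q := by
      have := ((ContinuousLinearMap.fst ℝ ℝ ℝ).smulRight
        ((2 * Real.pi * ξ * Complex.I : ℂ))).hasFDerivAt (x := q)
      refine this.congr_of_eventuallyEq (Filter.Eventually.of_forall fun q => ?_)
      simp
      ring
    have e2 := e1.cexp
    have e3 : HasFDerivAt (fun q : ℝ × ℝ => K ((2 * Real.pi * ξ) ^ 2 * q.2))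
        (K' ((2 * Real.pi * ξ) ^ 2 * q.2) • ((2 * Real.pi * ξ) ^ 2 •
          (ContinuousLinearMap.snd ℝ ℝ ℝ))) q := by
      refine (hK _).comp_hasFDerivAt (h₂ := K) (f := fun q : ℝ × ℝ => (2 * Real.pi * ξ) ^ 2 * q.2) q ?_
      exact (hasFDerivAt_snd (p := q)).const_mul _
    have e4 : HasFDerivAt (fun q : ℝ × ℝ => ((K ((2 * Real.pi * ξ) ^ 2 * q.2) : ℝ) : ℂ))
        (Complex.ofRealCLM.comp (K' ((2 * Real.pi * ξ) ^ 2 * q.2) • ((2 * Real.pi * ξ) ^ 2 •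
          (ContinuousLinearMap.snd ℝ ℝ ℝ)))) q :=
      Complex.ofRealCLM.hasFDerivAt.comp q e3
    have e5 := (e2.const_mul (ψ ξ)).mul e4
    refine e5.congr_fderiv ?_
    ext <;> simp [L1, L2, a, b] <;> ring

theorem kerInt_contDiff {K : ℝ → ℝ} (hK : ContDiff ℝ ∞ K)
    (hM : ∀ n, ∃ M, ∀ y, |iteratedDeriv n K y| ≤ M) {ψ : ℝ → ℂ} (hψ : GoodWeight ψ) :
    ContDiff ℝ ∞ (kerInt K ψ) := by
  have hd : ∀ n y, HasDerivAt (iteratedDeriv n K) (iteratedDeriv (n + 1) K y) y := by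
    intro n y
    rw [iteratedDeriv_succ]
    exact ((hK.differentiable_iteratedDeriv n (by exact_mod_cast WithTop.coe_lt_top _)) y).hasDerivAt
  have hc : ∀ n, Continuous (iteratedDeriv n K) := fun n =>
    hK.continuous_iteratedDeriv n (by exact_mod_cast le_top)
  have hf : ∀ n (ψ : ℝ → ℂ) (hψ : GoodWeight ψ) p, _ := fun n ψ hψ p =>
    kerInt_hasFDerivAt (hd n) (hc (n + 1)) (hM n).choose_spec (hM (n + 1)).choose_spec hψ p
  have key : ∀ k : ℕ, ∀ n (ψ : ℝ → ℂ), GoodWeight ψ →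
      ContDiff ℝ k (kerInt (iteratedDeriv n K) ψ) := by
    intro k
    induction k with
    | zero =>
      intro n ψ hψ
      exact contDiff_zero.2 (continuous_iff_continuousAt.2 fun p => (hf n ψ hψ p).continuousAt)
    | succ k ih =>
      intro n ψ hψ
      push_cast
      refine contDiff_succ_iff_hasFDerivAt.2 ⟨_, ?_, hf n ψ hψ⟩
      exact ((ContinuousLinearMap.smulRightL ℝ (ℝ × ℝ) ℂ
        (ContinuousLinearMap.fst ℝ ℝ ℝ)).contDiff.comp (ih n _ (hψ.mul_pow _ 1))).add
        ((ContinuousLinearMap.smulRightL ℝ (ℝ × ℝ) ℂ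
        (ContinuousLinearMap.snd ℝ ℝ ℝ)).contDiff.comp (ih (n + 1) _ (hψ.mul_pow _ 2)))
  rw [contDiff_infty]
  intro k
  simpa using key k 0 ψ hψ

/-- Smooth even/odd splitting of a compactly supported function along translations. -/
theorem exists_split_scalar {φ : ℝ → ℝ} (hφ : ContDiff ℝ ∞ φ) (hs : HasCompactSupport φ) :
    ∃ A B : ℝ × ℝ → ℝ, ContDiff ℝ ∞ A ∧ ContDiff ℝ ∞ B ∧
      ∀ x s, φ (x + s) = A (x, s ^ 2) + s * B (x, s ^ 2) := by
  obtain ⟨C, hC, hcos, hM⟩ := exists_cos_kernel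
  have hs' : HasCompactSupport (fun x => (φ x : ℂ)) := hs.comp_left (g := Complex.ofReal) (by simp)
  have hφ' : ContDiff ℝ ∞ (fun x => (φ x : ℂ)) := Complex.ofRealCLM.contDiff.comp hφ
  let f : SchwartzMap ℝ ℂ := hs'.toSchwartzMap hφ'
  let g : SchwartzMap ℝ ℂ := FourierTransform.fourier f
  have hg : GoodWeight g := ⟨g.continuous, fun k => g.integrable_pow_mul _ k⟩
  have hinv : ∀ x, (φ x : ℂ) = ∫ ξ : ℝ, g ξ * Complex.exp (((2 * Real.pi * ξ * x : ℝ) : ℂ) * Complex.I) := by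
    intro x
    have h1 : FourierTransformInv.fourierInv g = f := FourierTransform.fourierInv_fourier_eq f
    have h2 : f x = (φ x : ℂ) := rfl
    rw [← h2, ← h1, SchwartzMap.fourierInv_coe, Real.fourierInv_eq']
    refine MeasureTheory.integral_congr_ae (Filter.Eventually.of_forall fun ξ => ?_)
    simp only [smul_eq_mul]
    rw [mul_comm]
    congr 4
    simp
    ring
  have hC' : ContDiff ℝ ∞ (deriv C) := by
    have := (contDiff_infty_iff_deriv.1 hC).2
    exact this
  have hM' : ∀ n, ∃ M, ∀ y, |iteratedDeriv n (deriv C) y| ≤ M := fun n => by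
    simpa only [iteratedDeriv_succ'] using hM (n + 1)
  have hg1 := hg.mul_pow (2 * Real.pi * Complex.I * (-2)) 1
  refine ⟨fun p => (kerInt C g p).re,
    fun p => (kerInt (deriv C) (fun ξ => g ξ * ((2 * Real.pi * Complex.I * (-2)) * (ξ : ℂ) ^ 1)) p).re,
    Complex.reCLM.contDiff.comp (kerInt_contDiff hC hM hg),
    Complex.reCLM.contDiff.comp (kerInt_contDiff hC' hM' hg1), fun x s => ?_⟩
  have key : (φ (x + s) : ℂ) = kerInt C g (x, s ^ 2) + s *
      kerInt (deriv C) (fun ξ => g ξ * ((2 * Real.pi * Complex.I * (-2)) * (ξ : ℂ) ^ 1)) (x, s ^ 2) := by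
    obtain ⟨M0, hM0⟩ := hM 0
    obtain ⟨M1, hM1⟩ := hM' 0
    rw [iteratedDeriv_zero] at hM0 hM1
    rw [hinv, kerInt, kerInt, ← MeasureTheory.integral_const_mul, ← MeasureTheory.integral_add
      (kerInt_aux_int hC.continuous hM0 hg _)
      ((kerInt_aux_int hC'.continuous hM1 hg1 _).const_mul _)]
    refine MeasureTheory.integral_congr_ae (Filter.Eventually.of_forall fun ξ => ?_)
    simp only
    have h1 := hcos (2 * Real.pi * ξ * s)
    have h2 := cos_kernel_deriv hC hcos (2 * Real.pi * ξ * s)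
    rw [mul_pow] at h1 h2
    have h3 : Complex.exp (((2 * Real.pi * ξ * (x + s) : ℝ) : ℂ) * Complex.I) =
        Complex.exp (((2 * Real.pi * ξ * x : ℝ) : ℂ) * Complex.I) *
        ((Real.cos (2 * Real.pi * ξ * s) : ℂ) + (Real.sin (2 * Real.pi * ξ * s) : ℂ) * Complex.I) := by
      rw [Complex.ofReal_cos, Complex.ofReal_sin, ← Complex.exp_mul_I, ← Complex.exp_add]
      congr 1
      push_cast
      ring
    rw [h3, h1, ← neg_neg (Real.sin _), ← h2]
    push_cast
    ring
  have := congrArg Complex.re key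
  simpa using this

section split
variable {V : Type*} [NormedAddCommGroup V] [NormedSpace ℝ V]

def pdx (H : ℝ × ℝ → V) (p : ℝ × ℝ) : V := fderiv ℝ H p (1, 0)
def pdy (H : ℝ × ℝ → V) (p : ℝ × ℝ) : V := fderiv ℝ H p (0, 1)

theorem pdx_contDiff {H : ℝ × ℝ → V} (h : ContDiff ℝ ∞ H) : ContDiff ℝ ∞ (pdx H) :=
  (h.fderiv_right (m := ∞) (by simp)).clm_apply contDiff_const
theorem pdy_contDiff {H : ℝ × ℝ → V} (h : ContDiff ℝ ∞ H) : ContDiff ℝ ∞ (pdy H) :=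
  (h.fderiv_right (m := ∞) (by simp)).clm_apply contDiff_const

theorem hasDerivAt_pdx {H : ℝ × ℝ → V} (h : ContDiff ℝ ∞ H) (x y : ℝ) :
    HasDerivAt (fun x => H (x, y)) (pdx H (x, y)) x := by
  have h1 := ((h.differentiable (by simp)) (x, y)).hasFDerivAt
  exact h1.comp_hasDerivAt (f := fun x => (x, y)) x ((hasDerivAt_id x).prodMk (hasDerivAt_const x y))

theorem hasDerivAt_pdy {H : ℝ × ℝ → V} (h : ContDiff ℝ ∞ H) (x s : ℝ) :
    HasDerivAt (fun s => H (x, s ^ 2)) ((2 * s) • pdy H (x, s ^ 2)) s := by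
  have h1 := ((h.differentiable (by simp)) (x, s ^ 2)).hasFDerivAt
  have h2 : HasDerivAt (fun s : ℝ => (x, s ^ 2)) ((0 : ℝ), 2 * s) s := by
    refine (hasDerivAt_const s x).prodMk ?_
    simpa using hasDerivAt_pow 2 s
  have h3 := h1.comp_hasDerivAt (f := fun s => (x, s ^ 2)) s h2
  refine h3.congr_deriv ?_
  rw [pdy, ← map_smul]
  simp

theorem fderiv_eq_pd (H : ℝ × ℝ → V) (p : ℝ × ℝ) : fderiv ℝ H p =
    (ContinuousLinearMap.fst ℝ ℝ ℝ).smulRight (pdx H p) +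
      (ContinuousLinearMap.snd ℝ ℝ ℝ).smulRight (pdy H p) := by
  ext <;> simp [pdx, pdy]

theorem hasDerivAt_smul_zero {k : ℝ → V} (hk : Continuous k) :
    HasDerivAt (fun s => s • k s) (k 0) 0 := by
  rw [hasDerivAt_iff_tendsto_slope_zero]
  refine (hk.continuousAt.tendsto.mono_left nhdsWithin_le_nhds).congr' ?_
  filter_upwards [self_mem_nhdsWithin] with t ht
  have : t ≠ 0 := ht
  simp [smul_smul, inv_mul_cancel₀ this]

theorem tangent_split {γ : ℝ → V} (hγ : ContDiff ℝ ∞ γ) {A B : ℝ × ℝ → V}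
    (hA : ContDiff ℝ ∞ A) (hB : ContDiff ℝ ∞ B)
    (hAB : ∀ x s, γ (x + s) = A (x, s ^ 2) + s • B (x, s ^ 2)) :
    ∃ E O : ℝ × ℝ → V, ContDiff ℝ ∞ E ∧ ContDiff ℝ ∞ O ∧
      (∀ x s, γ (x - s) + s • deriv γ (x - s) = E (x, s ^ 2) + s ^ 3 • O (x, s ^ 2)) ∧
      (∀ x, HasFDerivAt E ((ContinuousLinearMap.fst ℝ ℝ ℝ).smulRight (deriv γ x) +
        (ContinuousLinearMap.snd ℝ ℝ ℝ).smulRight (-(1 / 2 : ℝ) • deriv (deriv γ) x)) (x, 0)) ∧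
      (∀ x, O (x, 0) = (1 / 3 : ℝ) • deriv (deriv (deriv γ)) x) := by
  have hγ1 : ContDiff ℝ ∞ (deriv γ) := (contDiff_infty_iff_deriv.1 hγ).2
  have hγ2 : ContDiff ℝ ∞ (deriv (deriv γ)) := (contDiff_infty_iff_deriv.1 hγ1).2
  have hplus : ∀ {g : ℝ → V}, ContDiff ℝ ∞ g → ∀ x s, HasDerivAt (fun s => g (x + s)) (deriv g (x + s)) s := by
    intro g hg x s
    have := (hg.differentiable (by simp) (x + s)).hasDerivAt
    exact this.comp_const_add x s
  have hminus : ∀ {g : ℝ → V}, ContDiff ℝ ∞ g → ∀ x s, HasDerivAt (fun s => g (x - s)) (-deriv g (x - s)) s := by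
    intro g hg x s
    have := (hg.differentiable (by simp) (x - s)).hasDerivAt
    exact this.comp_const_sub x s
  have dx : ∀ x s, deriv γ (x + s) = pdx A (x, s ^ 2) + s • pdx B (x, s ^ 2) := by
    intro x s
    have h1 : HasDerivAt (fun x => γ (x + s)) (deriv γ (x + s)) x :=
      (hγ.differentiable (by simp) (x + s)).hasDerivAt.comp_add_const x s
    simp_rw [hAB] at h1
    exact h1.unique ((hasDerivAt_pdx hA x _).add ((hasDerivAt_pdx hB x _).const_smul s))
  have ds : ∀ x s, deriv γ (x + s) = (2 * s) • pdy A (x, s ^ 2) +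
      (B (x, s ^ 2) + (2 * s ^ 2) • pdy B (x, s ^ 2)) := by
    intro x s
    have h1 := hplus hγ x s
    simp_rw [hAB] at h1
    have h2 := (hasDerivAt_pdy hA x s).add ((hasDerivAt_id s).smul (hasDerivAt_pdy hB x s))
    rw [h1.unique h2]
    simp only [id]
    module
  have dxm : ∀ x s, deriv γ (x - s) = pdx A (x, s ^ 2) - s • pdx B (x, s ^ 2) := by
    intro x s
    have := dx x (-s)
    rw [neg_sq, ← sub_eq_add_neg] at this
    rw [this]; module
  have dsm : ∀ x s, deriv γ (x - s) = -((2 * s) • pdy A (x, s ^ 2)) +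
      (B (x, s ^ 2) + (2 * s ^ 2) • pdy B (x, s ^ 2)) := by
    intro x s
    have := ds x (-s)
    rw [neg_sq, ← sub_eq_add_neg] at this
    rw [this]; module
  have hBx0 : ∀ x, pdx B (x, 0) = deriv (deriv γ) x := by
    intro x
    have h0 : ∀ x, B (x, 0) = deriv γ x := by
      intro x; simpa using (ds x 0).symm
    have := hasDerivAt_pdx hB x 0
    simp_rw [h0] at this
    exact this.deriv.symm
  have hAx0 : ∀ x, pdx A (x, 0) = deriv γ x := by
    intro x; simpa using (dx x 0).symm
  have hAy0 : ∀ x, pdy A (x, 0) = (1 / 2 : ℝ) • deriv (deriv γ) x := by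
    intro x
    have h1 := (hplus hγ1 x 0).sub (hminus hγ1 x 0)
    have e : (fun s => deriv γ (x + s)) - (fun s => deriv γ (x - s)) =
        fun s => s • ((4 : ℝ) • pdy A (x, s ^ 2)) := by
      funext s
      simp only [Pi.sub_apply]
      rw [ds, dsm]; module
    rw [e] at h1
    have hc : Continuous (fun s : ℝ => (4 : ℝ) • pdy A (x, s ^ 2)) := by
      have := (pdy_contDiff hA).continuous
      fun_prop
    have h2 := h1.unique (hasDerivAt_smul_zero hc)
    simp only [add_zero, sub_zero, sub_neg_eq_add, ne_eq, OfNat.ofNat_ne_zero, not_false_eq_true,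
      zero_pow] at h2
    have h3 : pdy A (x, 0) = (1 / 4 : ℝ) • ((4 : ℝ) • pdy A (x, 0)) := by module
    rw [h3, ← h2]; module
  have hBy0 : ∀ x, pdy B (x, 0) = (1 / 6 : ℝ) • deriv (deriv (deriv γ)) x := by
    intro x
    have h0 : ∀ s, deriv (deriv γ) (x + s) - deriv (deriv γ) (x - s) =
        s • ((12 : ℝ) • pdy B (x, s ^ 2) + (8 * s ^ 2) • pdy (pdy B) (x, s ^ 2)) := by
      intro s
      have h1 := (hplus hγ1 x s).add (hminus hγ1 x s)
      have e : (fun s => deriv γ (x + s)) + (fun s => deriv γ (x - s)) =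
          fun s => (2 : ℝ) • B (x, s ^ 2) + (4 * s ^ 2) • pdy B (x, s ^ 2) := by
        funext s
        simp only [Pi.add_apply]
        rw [ds, dsm]; module
      rw [e] at h1
      have h4 : HasDerivAt (fun s : ℝ => 4 * s ^ 2) (8 * s) s := by
        have := (hasDerivAt_pow 2 s).const_mul 4
        refine this.congr_deriv ?_
        norm_num; ring
      have h2 := ((hasDerivAt_pdy hB x s).const_smul (2 : ℝ)).add
        (h4.smul (hasDerivAt_pdy (pdy_contDiff hB) x s))
      have h3 := h1.unique h2
      rw [sub_eq_add_neg, h3]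
      module
    have h1 := (hplus hγ2 x 0).sub (hminus hγ2 x 0)
    have e : (fun s => deriv (deriv γ) (x + s)) - (fun s => deriv (deriv γ) (x - s)) =
        fun s => s • ((12 : ℝ) • pdy B (x, s ^ 2) + (8 * s ^ 2) • pdy (pdy B) (x, s ^ 2)) := by
      funext s
      exact h0 s
    rw [e] at h1
    have hc : Continuous (fun s : ℝ => (12 : ℝ) • pdy B (x, s ^ 2) +
        (8 * s ^ 2) • pdy (pdy B) (x, s ^ 2)) := by
      have := (pdy_contDiff hB).continuous
      have := (pdy_contDiff (pdy_contDiff hB)).continuous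
      fun_prop
    have h2 := h1.unique (hasDerivAt_smul_zero hc)
    simp only [add_zero, sub_zero, sub_neg_eq_add, ne_eq, OfNat.ofNat_ne_zero, not_false_eq_true,
      zero_pow, mul_zero, zero_smul] at h2
    have h3 : pdy B (x, 0) = (1 / 12 : ℝ) • ((12 : ℝ) • pdy B (x, 0)) := by module
    rw [h3, ← h2]; module
  refine ⟨fun p => A p - p.2 • pdx B p, fun p => (2 : ℝ) • pdy B p,
    hA.sub (contDiff_snd.smul (pdx_contDiff hB)), contDiff_const.smul (pdy_contDiff hB), ?_, ?_, ?_⟩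
  · intro x s
    have h1 : γ (x - s) = A (x, s ^ 2) - s • B (x, s ^ 2) := by
      have := hAB x (-s)
      rw [neg_sq, ← sub_eq_add_neg] at this
      rw [this]; module
    have h2 : pdx A (x, s ^ 2) = B (x, s ^ 2) + (2 * s ^ 2) • pdy B (x, s ^ 2) := by
      have e1 : pdx A (x, s ^ 2) = (1 / 2 : ℝ) • (deriv γ (x + s) + deriv γ (x - s)) := by
        rw [dx, dxm]; module
      rw [e1, ds, dsm]; module
    rw [h1, dxm, h2]
    module
  · intro x
    have e1 := (hA.differentiable (by simp) (x, 0)).hasFDerivAt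
    have e2 := ((pdx_contDiff hB).differentiable (by simp) (x, 0)).hasFDerivAt
    have e3 := e1.sub ((hasFDerivAt_snd (𝕜 := ℝ) (p := ((x, 0) : ℝ × ℝ))).smul e2)
    refine e3.congr_fderiv ?_
    rw [fderiv_eq_pd, hAx0, hAy0, hBx0]
    ext
    · simp
    · simp; module
  · intro x
    change (2 : ℝ) • pdy B (x, 0) = _
    rw [hBy0]; module

end split

theorem exists_split_pi {m : ℕ} {γ : ℝ → Fin m → ℝ} (hγ : ContDiff ℝ ∞ γ) (hs : HasCompactSupport γ) :
    ∃ A B : ℝ × ℝ → Fin m → ℝ, ContDiff ℝ ∞ A ∧ ContDiff ℝ ∞ B ∧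
      ∀ x s, γ (x + s) = A (x, s ^ 2) + s • B (x, s ^ 2) := by
  have h : ∀ j, ∃ A B : ℝ × ℝ → ℝ, ContDiff ℝ ∞ A ∧ ContDiff ℝ ∞ B ∧
      ∀ x s, γ (x + s) j = A (x, s ^ 2) + s * B (x, s ^ 2) := fun j =>
    exists_split_scalar (φ := fun x => γ x j) (contDiff_pi.1 hγ j)
      (hs.comp_left (g := fun v : Fin m → ℝ => v j) rfl)
  choose A B hA hB hAB using h
  refine ⟨fun p j => A j p, fun p j => B j p, contDiff_pi.2 hA, contDiff_pi.2 hB, fun x s => ?_⟩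
  funext j
  simpa using hAB j x s

theorem exists_extend_basis {m : ℕ} (hm : 3 ≤ m) {a b c : Fin m → ℝ}
    (h : LinearIndependent ℝ ![a, b, c]) :
    ∃ v : ℕ → Fin m → ℝ, v 0 = a ∧ v 1 = b ∧ v 2 = c ∧
      LinearIndependent ℝ (fun i : Fin m => v i) := by
  have key : ∀ n, 3 ≤ n → n ≤ m → ∃ v : ℕ → Fin m → ℝ, v 0 = a ∧ v 1 = b ∧ v 2 = c ∧
      LinearIndependent ℝ (fun i : Fin n => v i) := by
    intro n hn
    induction n, hn using Nat.le_induction with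
    | base =>
      intro _
      refine ⟨fun n => if n = 0 then a else if n = 1 then b else c, by simp, by simp, by simp, ?_⟩
      convert h using 1
      funext i
      fin_cases i <;> simp
    | succ n hn ih =>
      intro hnm
      obtain ⟨v, h0, h1, h2, hv⟩ := ih (by omega)
      obtain ⟨x, hx⟩ := exists_linearIndependent_snoc_of_lt_finrank hv (by simp; omega)
      refine ⟨Function.update v n x, ?_, ?_, ?_, ?_⟩
      · rw [Function.update_of_ne (by omega), h0]
      · rw [Function.update_of_ne (by omega), h1]
      · rw [Function.update_of_ne (by omega), h2]
      · suffices e : (fun i : Fin (n + 1) => Function.update v n x i) =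
            (Fin.snoc (fun i : Fin n => v i) x : Fin (n + 1) → Fin m → ℝ) by
          rw [e]; exact hx
        funext i
        refine Fin.lastCases ?_ (fun j => ?_) i
        · simp
        · rw [Fin.snoc_castSucc, Function.update_of_ne (by simp [j.isLt.ne])]
          simp
  exact key m hm le_rfl

theorem local_inverse_smooth {F : Type*} [NormedAddCommGroup F] [NormedSpace ℝ F] [CompleteSpace F]
    {Φ : F → F} (hΦ : ContDiff ℝ ∞ Φ) {L : F ≃L[ℝ] F} (hL : HasFDerivAt Φ (L : F →L[ℝ] F) 0) :
    ∃ (W V : Set F) (τ : F → F), IsOpen W ∧ IsOpen V ∧ 0 ∈ W ∧ (∀ z ∈ W, Φ z ∈ V) ∧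
      (∀ y ∈ V, τ y ∈ W) ∧ (∀ z ∈ W, τ (Φ z) = z) ∧ (∀ y ∈ V, Φ (τ y) = y) ∧
      ContDiffOn ℝ ∞ τ V := by
  let e := hΦ.contDiffAt.toOpenPartialHomeomorph Φ hL (by simp)
  have he : (e : F → F) = Φ := rfl
  let S : Set F := {z | fderiv ℝ Φ z ∈ range ((↑) : (F ≃L[ℝ] F) → F →L[ℝ] F)}
  have hS : IsOpen S :=
    (ContinuousLinearEquiv.isOpen (𝕜 := ℝ) (E := F) (F := F)).preimage
      (hΦ.continuous_fderiv (by simp))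
  refine ⟨e.source ∩ S, e.target ∩ e.symm ⁻¹' S, e.symm, e.open_source.inter hS,
    e.isOpen_inter_preimage_symm hS, ⟨?_, ?_⟩, ?_, ?_, ?_, ?_, ?_⟩
  · exact hΦ.contDiffAt.mem_toOpenPartialHomeomorph_source hL (by simp)
  · exact ⟨L, hL.fderiv.symm⟩
  · rintro z ⟨hz, hz'⟩
    refine ⟨e.map_source hz, ?_⟩
    change e.symm (e z) ∈ S
    rwa [e.left_inv hz]
  · rintro y ⟨hy, hy'⟩
    exact ⟨e.map_target hy, hy'⟩
  · rintro z ⟨hz, hz'⟩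
    exact e.left_inv hz
  · rintro y ⟨hy, hy'⟩
    exact e.right_inv hy
  · rintro y ⟨hy, ⟨L', hL'⟩⟩
    refine (e.contDiffAt_symm hy (f₀' := L') ?_ ?_).contDiffWithinAt
    · rw [hL', he]
      exact (hΦ.differentiable (by simp) _).hasFDerivAt
    · exact hΦ.contDiffAt

theorem exists_cut {V : Type*} [NormedAddCommGroup V] [NormedSpace ℝ V]
    {I : Set ℝ} (hI : IsOpen I) {γ : ℝ → V} (hγ : ContDiffOn ℝ ∞ γ I) {t₀ : ℝ} (ht₀ : t₀ ∈ I) :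
    ∃ δ : ℝ → V, ContDiff ℝ ∞ δ ∧ HasCompactSupport δ ∧
      ∃ J : Set ℝ, IsOpen J ∧ t₀ ∈ J ∧ ∀ t ∈ J, γ t = δ t := by
  obtain ⟨ε, hε, hεI⟩ := Metric.isOpen_iff.1 hI t₀ ht₀
  let χ : ContDiffBump t₀ := ⟨ε / 4, ε / 2, by positivity, by linarith⟩
  have hsup : tsupport χ ⊆ I := by
    rw [χ.tsupport_eq]
    exact (Metric.closedBall_subset_ball (by change ε / 2 < ε; linarith)).trans hεI
  refine ⟨fun t => χ t • γ t, ?_, ?_, Metric.ball t₀ (ε / 4), Metric.isOpen_ball,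
    Metric.mem_ball_self (by positivity), ?_⟩
  · rw [contDiff_iff_contDiffAt]
    intro t
    by_cases ht : t ∈ tsupport χ
    · exact χ.contDiff.contDiffAt.smul ((hγ t (hsup ht)).contDiffAt (hI.mem_nhds (hsup ht)))
    · have : (fun t => χ t • γ t) =ᶠ[𝓝 t] fun _ => 0 := by
        have h1 := notMem_tsupport_iff_eventuallyEq.1 ht
        filter_upwards [h1] with s hs
        simp [hs]
      exact contDiffAt_const.congr_of_eventuallyEq this
  · exact χ.hasCompactSupport.smul_right
  · intro t ht
    have : χ t = 1 := χ.one_of_mem_closedBall (Metric.ball_subset_closedBall ht)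
    simp [this]

theorem frame_equiv {m : ℕ} (v : ℕ → Fin m → ℝ) (hv : LinearIndependent ℝ (fun i : Fin m => v i))
    (i0 i1 i2 : Fin m) (h0 : i0.val = 0) (h1 : i1.val = 1) (h2 : i2.val = 2)
    (L : (Fin m → ℝ) →L[ℝ] (Fin m → ℝ))
    (hL : ∀ z, L z = z i0 • v 0 + z i1 • (-(1 / 2 : ℝ) • v 1) + z i2 • ((1 / 3 : ℝ) • v 2) +
      ∑ j : Fin m, (if j.val < 3 then 0 else z j) • v j) :
    ∃ L' : (Fin m → ℝ) ≃L[ℝ] (Fin m → ℝ), (L' : (Fin m → ℝ) →L[ℝ] (Fin m → ℝ)) = L := by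
  have hinj : Function.Injective (L : (Fin m → ℝ) →ₗ[ℝ] (Fin m → ℝ)) := by
    rw [← LinearMap.ker_eq_bot, LinearMap.ker_eq_bot']
    intro z hz
    have hz' : L z = 0 := hz
    have hsum : ∑ j : Fin m, ((if j = i0 then z i0 else 0) + (if j = i1 then -(1 / 2 : ℝ) * z i1 else 0)
        + (if j = i2 then (1 / 3 : ℝ) * z i2 else 0) + (if j.val < 3 then 0 else z j)) • v j = 0 := by
      rw [← hz', hL]
      simp only [add_smul, Finset.sum_add_distrib, ite_smul, zero_smul, Finset.sum_ite_eq',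
        Finset.mem_univ, if_true, h0, h1, h2]
      module
    have key := Fintype.linearIndependent_iff.1 hv _ hsum
    have n01 : i0 ≠ i1 := fun h => by rw [h] at h0; omega
    have n02 : i0 ≠ i2 := fun h => by rw [h] at h0; omega
    have n12 : i1 ≠ i2 := fun h => by rw [h] at h1; omega
    funext j
    by_cases hj0 : j = i0
    · have := key i0
      simp [n01, n02, h0] at this
      simp [hj0, this]
    by_cases hj1 : j = i1
    · have := key i1
      simp [n01.symm, n12, h1] at this
      simp [hj1, this]
    by_cases hj2 : j = i2
    · have := key i2
      simp [n02.symm, n12.symm, h2] at this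
      simp [hj2, this]
    have hj : ¬ j.val < 3 := by
      intro h
      rw [Fin.ext_iff] at hj0 hj1 hj2
      omega
    have := key j
    simpa [hj0, hj1, hj2, hj] using this
  refine ⟨(LinearEquiv.ofInjectiveEndo (L : (Fin m → ℝ) →ₗ[ℝ] (Fin m → ℝ)) hinj).toContinuousLinearEquiv, ?_⟩
  ext z
  rfl

theorem euclidean_tangent_surface_cuspidal_edge (m : ℕ) (hm : 3 ≤ m)
    (I : Set ℝ) (hI : IsOpen I) (hI' : I.OrdConnected)
    (γ : ℝ → Fin m → ℝ) (hγ : ContDiffOn ℝ (⊤ : ℕ∞) γ I)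
    (t₀ : ℝ) (ht₀ : t₀ ∈ I)
    (hind : LinearIndependent ℝ
      ![deriv γ t₀, deriv (deriv γ) t₀, deriv (deriv (deriv γ)) t₀]) :
    GermDiffeomorphic
      (fun p : ℝ × ℝ => γ p.1 + p.2 • deriv γ p.1) (t₀, (0 : ℝ))
      (fun p : ℝ × ℝ => fun j : Fin m =>
        if j.val = 0 then p.1
        else if j.val = 1 then p.2 ^ 2
        else if j.val = 2 then p.2 ^ 3
        else 0)
      ((0 : ℝ), (0 : ℝ)) := by
  obtain ⟨δ, hδ, hδs, J, hJ, hJt, hJe⟩ := exists_cut hI hγ ht₀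
  have hd0 : ∀ t ∈ J, γ =ᶠ[𝓝 t] δ := fun t ht => by
    filter_upwards [hJ.mem_nhds ht] with s hs using hJe s hs
  have hd1 : ∀ t ∈ J, deriv γ t = deriv δ t := fun t ht => (hd0 t ht).deriv_eq
  rw [(hd0 t₀ hJt).deriv.deriv.deriv_eq, (hd0 t₀ hJt).deriv.deriv_eq, hd1 t₀ hJt] at hind
  obtain ⟨A, B, hA, hB, hAB⟩ := exists_split_pi hδ hδs
  obtain ⟨E, O, hE, hO, hEO, hdE, hO0⟩ := tangent_split hδ hA hB hAB
  obtain ⟨v, hv0, hv1, hv2, hv⟩ := exists_extend_basis hm hind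
  let i0 : Fin m := ⟨0, by omega⟩
  let i1 : Fin m := ⟨1, by omega⟩
  let i2 : Fin m := ⟨2, by omega⟩
  let π : (Fin m) → (Fin m → ℝ) →L[ℝ] ℝ := fun i => ContinuousLinearMap.proj i
  let R : (Fin m → ℝ) →L[ℝ] (Fin m → ℝ) :=
    ∑ j : Fin m, (if j.val < 3 then (0 : (Fin m → ℝ) →L[ℝ] ℝ) else π j).smulRight (v j)
  have hR : ∀ z, R z = ∑ j : Fin m, (if j.val < 3 then 0 else z j) • v j := by
    intro z
    simp only [R, _root_.sum_apply, ContinuousLinearMap.smulRight_apply]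
    refine Finset.sum_congr rfl fun j _ => ?_
    split_ifs <;> simp [π]
  let P : (Fin m → ℝ) → ℝ × ℝ := fun z => (t₀ + z i0, z i1)
  have hP : ContDiff ℝ ∞ P := by
    refine ContDiff.prodMk ?_ ?_
    · exact contDiff_const.add (contDiff_apply ℝ ℝ i0)
    · exact contDiff_apply ℝ ℝ i1
  have hP0 : P 0 = (t₀, 0) := by simp [P]
  have hPd : HasFDerivAt P ((π i0).prod (π i1)) 0 :=
    ((π i0).hasFDerivAt.const_add t₀).prodMk (π i1).hasFDerivAt
  let Φ : (Fin m → ℝ) → (Fin m → ℝ) := fun z => E (P z) + z i2 • O (P z) + R z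
  have hΦ : ContDiff ℝ ∞ Φ :=
    ((hE.comp hP).add ((contDiff_apply ℝ ℝ i2).smul (hO.comp hP))).add R.contDiff
  have hEd := hdE t₀
  rw [← hP0] at hEd
  have hOd := (hO.differentiable (by simp) (P 0)).hasFDerivAt
  have hΦd := ((hEd.comp 0 hPd).add (((π i2).hasFDerivAt (x := 0)).smul (hOd.comp 0 hPd))).add
    (R.hasFDerivAt (x := 0))
  obtain ⟨D, hD, hDd⟩ : ∃ D : (Fin m → ℝ) →L[ℝ] (Fin m → ℝ),
      (∀ z, D z = z i0 • v 0 + z i1 • (-(1 / 2 : ℝ) • v 1) + z i2 • ((1 / 3 : ℝ) • v 2) +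
        ∑ j : Fin m, (if j.val < 3 then 0 else z j) • v j) ∧ HasFDerivAt Φ D 0 := by
    refine ⟨_, fun z => ?_, hΦd⟩
    rw [_root_.add_apply, hR z]
    congr 1
    simp only [Function.comp_apply, hP0, hO0, hv0, hv1, hv2]
    simp [π]
  obtain ⟨L, hL⟩ := frame_equiv v hv i0 i1 i2 rfl rfl rfl D hD
  rw [← hL] at hDd
  obtain ⟨W, V, τ, hW, hV, h0W, hΦW, hτV, hτΦ, hΦτ, hτ⟩ := local_inverse_smooth (Φ := Φ) hΦ hDd
  let g : ℝ × ℝ → Fin m → ℝ := fun p => fun j : Fin m =>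
        if j.val = 0 then p.1
        else if j.val = 1 then p.2 ^ 2
        else if j.val = 2 then p.2 ^ 3
        else 0
  have hgc : Continuous g := by
    refine continuous_pi fun j => ?_
    simp only [g]
    split_ifs <;> fun_prop
  let σ : ℝ × ℝ → ℝ × ℝ := fun p => (p.1 + p.2 - t₀, p.2)
  let σ' : ℝ × ℝ → ℝ × ℝ := fun p => (p.1 - p.2 + t₀, p.2)
  have hσ : ContDiff ℝ ∞ σ := by fun_prop
  have hσ' : ContDiff ℝ ∞ σ' := by fun_prop
  have hl : ∀ p, σ' (σ p) = p := fun p => by ext <;> simp [σ, σ']; ring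
  have hr : ∀ p, σ (σ' p) = p := fun p => by ext <;> simp [σ, σ']; ring
  let U : Set (ℝ × ℝ) := {p | p.1 ∈ J ∧ g (σ p) ∈ W}
  have hU : IsOpen U :=
    (hJ.preimage continuous_fst).inter (hW.preimage (hgc.comp hσ.continuous))
  have hσ0 : σ (t₀, 0) = (0, 0) := by simp [σ]
  have hg0 : g (0, 0) = 0 := by
    funext j
    simp [g]
  have hpU : (t₀, (0 : ℝ)) ∈ U := ⟨hJt, by rw [hσ0, hg0]; exact h0W⟩
  have hfΦ : ∀ p ∈ U, γ p.1 + p.2 • deriv γ p.1 = Φ (g (σ p)) := by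
    intro p hp
    rw [hJe _ hp.1, hd1 _ hp.1]
    have e1 : P (g (σ p)) = (p.1 + p.2, p.2 ^ 2) := by simp [P, g, σ, i0, i1]
    have e2 : g (σ p) i2 = p.2 ^ 3 := by simp [g, σ, i2]
    have e3 : R (g (σ p)) = 0 := by
      rw [hR]
      refine Finset.sum_eq_zero fun j _ => ?_
      split_ifs with hj
      · simp
      · have : g (σ p) j = 0 := by
          simp only [g]
          rw [if_neg (by omega), if_neg (by omega), if_neg (by omega)]
        rw [this, zero_smul]
    simp only [Φ]
    rw [e1, e2, e3, add_zero, ← hEO]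
    simp
  have hτW : τ '' V = W := by
    apply Subset.antisymm
    · rintro _ ⟨y, hy, rfl⟩
      exact hτV y hy
    · intro z hz
      exact ⟨Φ z, hΦW z hz, hτΦ z hz⟩
  refine ⟨U, V, σ, τ, ⟨hU, ?_, hσ.contDiffOn, σ', hσ'.contDiffOn, fun x _ => hl x⟩,
    ⟨hV, by rw [hτW]; exact hW, hτ, Φ, hΦ.contDiffOn, hΦτ⟩, hpU, ?_, hσ0, ?_, ?_, ?_⟩
  · rw [image_eq_preimage_of_inverse hl hr]
    exact hU.preimage hσ'.continuous
  · change γ (t₀, (0 : ℝ)).1 + (t₀, (0 : ℝ)).2 • deriv γ (t₀, (0 : ℝ)).1 ∈ V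
    rw [hfΦ _ hpU]
    exact hΦW _ hpU.2
  · change τ (γ (t₀, (0 : ℝ)).1 + (t₀, (0 : ℝ)).2 • deriv γ (t₀, (0 : ℝ)).1) = g (0, 0)
    rw [hfΦ _ hpU, hτΦ _ hpU.2, hσ0]
  · intro p hp
    change γ p.1 + p.2 • deriv γ p.1 ∈ V
    rw [hfΦ _ hp]
    exact hΦW _ hp.2
  · intro p hp
    change τ (γ p.1 + p.2 • deriv γ p.1) = g (σ p)
    rw [hfΦ _ hp, hτΦ _ hp.2]
end
end
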